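/- arXiv:1603.07301 — 2 statements merged into one kernel-verified Lean document; each statement's English description precedes it below -/
import Mathlib

section
/- Under Assumptions 1 and 2, the function F is strongly convex and possesses a unique global minimizer ĥ ∈ ℝ^N, and the MM subspace iterates (h_n)_{n≥1} converge to ĥ. -/
open Matrix Filter Topology

noncomputable section

/-- Identification of `EuclideanSpace ℝ (Fin N)` with plain tuples `Fin N → ℝ`. -/
def toEuc {N : ℕ} (v : Fin N → ℝ) : EuclideanSpace ℝ (Fin N) :=
  (WithLp.equiv 2 (Fin N → ℝ)).symm v

def ofEuc {N : ℕ} (v : EuclideanSpace ℝ (Fin N)) : Fin N → ℝ :=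
  WithLp.equiv 2 (Fin N → ℝ) v

/-- The quadratic form `vᵀ M v`. -/
def qf {N : ℕ} (M : Matrix (Fin N) (Fin N) ℝ)
    (v : EuclideanSpace ℝ (Fin N)) : ℝ :=
  ofEuc v ⬝ᵥ M.mulVec (ofEuc v)

/-- Matrix-vector product `M v`, viewed in `EuclideanSpace`. -/
def mulE {N : ℕ} (M : Matrix (Fin N) (Fin N) ℝ)
    (v : EuclideanSpace ℝ (Fin N)) : EuclideanSpace ℝ (Fin N) :=
  toEuc (M.mulVec (ofEuc v))

/-- The range of the matrix `D`, i.e. `{D u : u ∈ ℝ^M}`, as a subset of `EuclideanSpace`. -/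
def rangeD {N M : ℕ} (D : Matrix (Fin N) (Fin M) ℝ) : Set (EuclideanSpace ℝ (Fin N)) :=
  {x | ∃ u : Fin M → ℝ, x = toEuc (D.mulVec u)}

open scoped Classical in
/-- The Moore–Penrose pseudo-inverse of a real matrix, defined via its characterizing
(Penrose) equations; it exists and is unique for every real matrix. -/
def pinv {m n : ℕ} (A : Matrix (Fin m) (Fin n) ℝ) : Matrix (Fin n) (Fin m) ℝ :=
  if h : ∃ B : Matrix (Fin n) (Fin m) ℝ,
      A * B * A = A ∧ B * A * B = B ∧ (A * B)ᵀ = A * B ∧ (B * A)ᵀ = B * A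
  then h.choose else 0

end

/-!
The limit objective `F` is strongly convex, so `∇ F` is antilipschitz; hence if `∇ F (hₙ) → 0`
then `(hₙ)` is Cauchy and its limit minimizes `F`. To get `∇ F (hₙ) → 0`, note that the search
subspace contains a gradient step, so each iteration decreases `Fₙ` by at least a fixed multiple of
`‖∇ Fₙ (hₙ)‖²`. On a bounded set, replacing `Fₙ` by `Fₙ₊₁` costs only a summable error, so these
squares are summable. Either alternative in the last assumption bounds `(hₙ)`: in the static case
the iterates stay in a sublevel set of `F`, and otherwise optimality of `y = hₙ₊₁` in a subspace
containing `y` itself gives `⟪y, Aₙ y⟫ = ⟪Aₙ hₙ - ∇ Fₙ (hₙ), y⟫`, where `Aₙ` is eventually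
uniformly coercive and `Aₙ hₙ - ∇ Fₙ (hₙ) = B (hₙ) hₙ - ∇ Ψ (hₙ) + rₙ` is bounded.
-/

open scoped Gradient RealInnerProductSpace

section StrongConvexity

variable {E : Type*} [NormedAddCommGroup E] [InnerProductSpace ℝ E]

lemma mul_norm_le_norm_of_mul_sq_norm_le_inner {c : ℝ} {u v : E}
    (huv : c * ‖v‖ ^ 2 ≤ ⟪u, v⟫) : c * ‖v‖ ≤ ‖u‖ := by
  rcases eq_or_ne v 0 with rfl | hv
  · simp
  · refine le_of_mul_le_mul_right ?_ (norm_pos_iff.2 hv)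
    calc c * ‖v‖ * ‖v‖ = c * ‖v‖ ^ 2 := by ring
      _ ≤ ⟪u, v⟫ := huv
      _ ≤ ‖u‖ * ‖v‖ := real_inner_le_norm u v

variable [CompleteSpace E] {f : E → ℝ} {s : Set E} {m : ℝ} {x y g : E}

lemma add_inner_sub_le_of_convexOn (hf : ConvexOn ℝ s f) (hx : x ∈ s) (hy : y ∈ s)
    (hg : HasGradientAt f g x) : f x + ⟪g, y - x⟫ ≤ f y := by
  let γ : ℝ →ᵃ[ℝ] E := AffineMap.lineMap x y
  have hconv : ConvexOn ℝ (γ ⁻¹' s) (f ∘ γ) := hf.comp_affineMap γ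
  have hderiv : HasDerivAt (f ∘ γ) ⟪g, y - x⟫ 0 := by
    have hγ : HasDerivAt γ (y - x) 0 := AffineMap.hasDerivAt_lineMap
    have hfγ : HasFDerivAt f (InnerProductSpace.toDual ℝ E g) (γ 0) := by
      simpa [γ] using hg.hasFDerivAt
    simpa using hfγ.comp_hasDerivAt 0 hγ
  have hslope := hconv.le_slope_of_hasDerivAt (by simpa [γ]) (by simpa [γ]) one_pos hderiv
  simp only [slope_def_field, Function.comp_apply, γ, AffineMap.lineMap_apply_zero,
    AffineMap.lineMap_apply_one, sub_zero, div_one] at hslope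
  linarith

lemma add_inner_sub_add_sq_norm_sub_le_of_strongConvexOn (hf : StrongConvexOn s m f)
    (hx : x ∈ s) (hy : y ∈ s) (hg : HasGradientAt f g x) :
    f x + ⟪g, y - x⟫ + m / 2 * ‖y - x‖ ^ 2 ≤ f y := by
  have hgrad : HasGradientAt (fun z ↦ f z - m / 2 * ‖z‖ ^ 2) (g - m • x) x := by
    rw [hasGradientAt_iff_hasFDerivAt]
    refine (hg.hasFDerivAt.sub
      ((hasStrictFDerivAt_norm_sq x).hasFDerivAt.const_mul (m / 2))).congr_fderiv ?_
    ext v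
    simp only [_root_.sub_apply, _root_.smul_apply, InnerProductSpace.toDual_apply_apply,
      coe_innerSL_apply, nsmul_eq_mul, Nat.cast_ofNat, smul_eq_mul, map_sub, map_smul]
    ring
  have hconv := add_inner_sub_le_of_convexOn (strongConvexOn_iff_convex.1 hf) hx hy hgrad
  have hsq : ‖y‖ ^ 2 = ‖x‖ ^ 2 + 2 * ⟪x, y - x⟫ + ‖y - x‖ ^ 2 := by
    simpa using norm_add_sq_real x (y - x)
  rw [inner_sub_left, inner_smul_left, conj_trivial, hsq] at hconv
  linarith

lemma mul_norm_sub_le_norm_gradient_sub_of_strongConvexOn (hf : StrongConvexOn s m f)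
    (hx : x ∈ s) (hy : y ∈ s) (hdx : DifferentiableAt ℝ f x) (hdy : DifferentiableAt ℝ f y) :
    m * ‖x - y‖ ≤ ‖∇ f x - ∇ f y‖ := by
  refine mul_norm_le_norm_of_mul_sq_norm_le_inner ?_
  have hxy := add_inner_sub_add_sq_norm_sub_le_of_strongConvexOn hf hx hy hdx.hasGradientAt
  have hyx := add_inner_sub_add_sq_norm_sub_le_of_strongConvexOn hf hy hx hdy.hasGradientAt
  rw [← neg_sub x y, inner_neg_right, norm_neg] at hxy
  rw [inner_sub_left]
  linarith

lemma norm_sub_le_of_strongConvexOn_of_apply_le (hm : 0 < m) (hf : StrongConvexOn s m f)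
    (hx : x ∈ s) (hy : y ∈ s) (hg : HasGradientAt f g x) (hyx : f y ≤ f x) :
    ‖y - x‖ ≤ 2 / m * ‖g‖ := by
  have hgrad := add_inner_sub_add_sq_norm_sub_le_of_strongConvexOn hf hx hy hg
  have hnorm : m / 2 * ‖y - x‖ ≤ ‖-g‖ := by
    refine mul_norm_le_norm_of_mul_sq_norm_le_inner ?_
    rw [inner_neg_left]
    linarith
  rw [norm_neg] at hnorm
  calc ‖y - x‖ = 2 / m * (m / 2 * ‖y - x‖) := by field_simp
    _ ≤ 2 / m * ‖g‖ := by gcongr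

theorem exists_tendsto_minimizer_of_tendsto_gradient_zero (hm : 0 < m)
    (hf : StrongConvexOn Set.univ m f) (hd : Differentiable ℝ f) {ι : Type*} {l : Filter ι}
    [l.NeBot] {u : ι → E} (hu : Tendsto (fun i ↦ ∇ f (u i)) l (𝓝 0)) :
    ∃ z, (∀ y, f z ≤ f y) ∧ Tendsto u l (𝓝 z) := by
  have hanti : AntilipschitzWith (m.toNNReal)⁻¹ (∇ f) := by
    refine AntilipschitzWith.of_le_mul_dist fun x y ↦ ?_
    rw [NNReal.coe_inv, Real.coe_toNNReal m hm.le, ← div_eq_inv_mul, le_div_iff₀ hm, mul_comm,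
      dist_eq_norm, dist_eq_norm]
    exact mul_norm_sub_le_norm_gradient_sub_of_strongConvexOn hf (Set.mem_univ x) (Set.mem_univ y)
      (hd x) (hd y)
  have hle : map u l ≤ comap (∇ f) (𝓝 0) := tendsto_comap_iff.2 hu
  have : (comap (∇ f) (𝓝 0)).NeBot := NeBot.mono inferInstance hle
  have hcauchy : Cauchy (map u l) := (cauchy_nhds.comap hanti.comap_uniformity_le).mono hle
  obtain ⟨z, hz⟩ := CompleteSpace.complete hcauchy
  have huz : Tendsto u l (𝓝 z) := hz
  refine ⟨z, fun y ↦ ?_, huz⟩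
  have hlim : Tendsto (fun i ↦ f (u i) + ⟪∇ f (u i), y - u i⟫) l (𝓝 (f z)) := by
    simpa using ((hd z).continuousAt.tendsto.comp huz).add (hu.inner (huz.const_sub y))
  exact le_of_tendsto hlim (Eventually.of_forall fun i ↦ add_inner_sub_le_of_convexOn
    (hf.convexOn fun t ↦ by positivity) (Set.mem_univ _) (Set.mem_univ y) (hd (u i)).hasGradientAt)

lemma exists_le_apply_of_convexOn_of_norm_le (hf : ConvexOn ℝ Set.univ f)
    (hd : DifferentiableAt ℝ f 0) (C : ℝ) : ∃ c, ∀ x, ‖x‖ ≤ C → c ≤ f x := by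
  refine ⟨f 0 - ‖∇ f 0‖ * C, fun x hx ↦ ?_⟩
  have hgrad := add_inner_sub_le_of_convexOn hf (Set.mem_univ 0) (Set.mem_univ x) hd.hasGradientAt
  have hinner := (abs_le.1 (abs_real_inner_le_norm (∇ f 0) x)).1
  rw [sub_zero] at hgrad
  nlinarith [norm_nonneg (∇ f 0)]

end StrongConvexity

section QuadraticForms

variable {E : Type*} [NormedAddCommGroup E] [InnerProductSpace ℝ E]

lemma abs_inner_apply_self_le (A : E →L[ℝ] E) (x : E) : |⟪x, A x⟫| ≤ ‖A‖ * ‖x‖ ^ 2 :=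
  calc |⟪x, A x⟫| ≤ ‖x‖ * ‖A x‖ := abs_real_inner_le_norm x (A x)
    _ ≤ ‖x‖ * (‖A‖ * ‖x‖) := by gcongr; exact A.le_opNorm x
    _ = ‖A‖ * ‖x‖ ^ 2 := by ring

lemma isSymmetric_of_tendsto {ι : Type*} {l : Filter ι} [l.NeBot] {T : ι → E →L[ℝ] E}
    {S : E →L[ℝ] E} (hT : ∀ i, (T i).IsSymmetric) (hTS : Tendsto T l (𝓝 S)) :
    S.IsSymmetric := by
  intro x y
  have happly (v : E) : Tendsto (fun i ↦ T i v) l (𝓝 (S v)) :=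
    ((ContinuousLinearMap.apply ℝ E v).continuous.tendsto S).comp hTS
  refine tendsto_nhds_unique ((happly x).inner tendsto_const_nhds) ?_
  exact (tendsto_const_nhds.inner (happly y)).congr fun i ↦ (hT i x y).symm

lemma eventually_mul_sq_norm_le_inner_of_tendsto {ι : Type*} {l : Filter ι} {T : ι → E →L[ℝ] E}
    {S : E →L[ℝ] E} {μ m : ℝ} (hμ : μ < m) (hS : ∀ v, m * ‖v‖ ^ 2 ≤ ⟪v, S v⟫)
    (hTS : Tendsto T l (𝓝 S)) : ∀ᶠ i in l, ∀ v, μ * ‖v‖ ^ 2 ≤ ⟪v, T i v⟫ := by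
  have hclose : ∀ᶠ i in l, ‖T i - S‖ < m - μ :=
    (tendsto_iff_norm_sub_tendsto_zero.1 hTS).eventually_lt_const (sub_pos.2 hμ)
  filter_upwards [hclose] with i hi v
  have hdiff := (abs_le.1 (abs_inner_apply_self_le (T i - S) v)).1
  rw [_root_.sub_apply, inner_sub_right] at hdiff
  nlinarith [hS v, sq_nonneg ‖v‖]

lemma exists_pos_forall_inner_add_apply_le {ι : Type*} {T : ℕ → E →L[ℝ] E} {S : E →L[ℝ] E}
    {B : ι → E →L[ℝ] E} {β : ℝ} (hTS : Tendsto T atTop (𝓝 S))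
    (hB : ∀ i v, ⟪v, B i v⟫ ≤ β * ‖v‖ ^ 2) :
    ∃ L > 0, ∀ n i v, ⟪v, (T n + B i) v⟫ ≤ L * ‖v‖ ^ 2 := by
  obtain ⟨ρ, hρ⟩ := hTS.norm.bddAbove_range
  have hTρ (n : ℕ) : ‖T n‖ ≤ ρ := hρ (Set.mem_range_self n)
  refine ⟨ρ + |β| + 1, by linarith [(norm_nonneg _).trans (hTρ 0), abs_nonneg β], fun n i v ↦ ?_⟩
  have hquad := (le_abs_self _).trans (abs_inner_apply_self_le (T n) v)
  rw [_root_.add_apply, inner_add_right]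
  nlinarith [hB i v, hTρ n, le_abs_self β, sq_nonneg ‖v‖]

lemma exists_pos_mul_sq_norm_le_inner_of_forall_pos [FiniteDimensional ℝ E] (T : E →L[ℝ] E)
    (hT : ∀ x, x ≠ 0 → 0 < ⟪x, T x⟫) : ∃ m > 0, ∀ x, m * ‖x‖ ^ 2 ≤ ⟪x, T x⟫ := by
  have hcont : Continuous fun x ↦ ⟪x, T x⟫ := continuous_id.inner T.continuous
  obtain ⟨m, hm, hmin⟩ := (isCompact_sphere (0 : E) 1).exists_forall_le' hcont.continuousOn
    fun x hx ↦ hT x (ne_zero_of_mem_unit_sphere ⟨x, hx⟩)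
  refine ⟨m, hm, fun x ↦ ?_⟩
  rcases eq_or_ne x 0 with rfl | hx
  · simp
  have hunit := hmin (‖x‖⁻¹ • x) (by simp [norm_smul, hx])
  rw [map_smul, inner_smul_left, inner_smul_right, conj_trivial] at hunit
  have hx' : ‖x‖ ≠ 0 := norm_ne_zero_iff.2 hx
  calc m * ‖x‖ ^ 2 ≤ ‖x‖⁻¹ * (‖x‖⁻¹ * ⟪x, T x⟫) * ‖x‖ ^ 2 := by gcongr
    _ = ⟪x, T x⟫ := by field_simp

/-- The criterion `½ ⟪x, A x⟫ - ⟪b, x⟫ + Ψ x`: a quadratic function plus a penalty `Ψ`. -/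
noncomputable def penalizedQuadratic (A : E →L[ℝ] E) (b : E) (Ψ : E → ℝ) (x : E) : ℝ :=
  1 / 2 * ⟪x, A x⟫ - ⟪b, x⟫ + Ψ x

variable {A : E →L[ℝ] E} {Ψ : E → ℝ} {m : ℝ}

lemma strongConvexOn_penalizedQuadratic (hA : ∀ v, m * ‖v‖ ^ 2 ≤ ⟪v, A v⟫)
    (hΨ : ConvexOn ℝ Set.univ Ψ) (b : E) :
    StrongConvexOn Set.univ m (penalizedQuadratic A b Ψ) := by
  refine ⟨convex_univ, fun x _ y _ s t hs ht hst ↦ ?_⟩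
  have hconv := hΨ.2 (Set.mem_univ x) (Set.mem_univ y) hs ht hst
  have hquad : ⟪s • x + t • y, A (s • x + t • y)⟫
      = s * ⟪x, A x⟫ + t * ⟪y, A y⟫ - s * t * ⟪x - y, A (x - y)⟫ := by
    obtain rfl : t = 1 - s := by linarith
    simp only [map_add, map_sub, map_smul, inner_add_left, inner_add_right, inner_sub_left,
      inner_sub_right, inner_smul_left, inner_smul_right, conj_trivial]
    ring
  have hcoer := mul_le_mul_of_nonneg_left (hA (x - y)) (mul_nonneg hs ht)
  simp only [penalizedQuadratic, smul_eq_mul, hquad, inner_add_right, inner_smul_right] at hconv ⊢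
  linarith

lemma abs_penalizedQuadratic_sub_le (A A' : E →L[ℝ] E) (b b' : E) (Ψ : E → ℝ) (x : E) :
    |penalizedQuadratic A b Ψ x - penalizedQuadratic A' b' Ψ x|
      ≤ 1 / 2 * ‖A - A'‖ * ‖x‖ ^ 2 + ‖b - b'‖ * ‖x‖ := by
  have hdiff : penalizedQuadratic A b Ψ x - penalizedQuadratic A' b' Ψ x
      = 1 / 2 * ⟪x, (A - A') x⟫ - ⟪b - b', x⟫ := by
    simp only [penalizedQuadratic, _root_.sub_apply, inner_sub_left, inner_sub_right]
    ring
  have hquad := abs_le.1 (abs_inner_apply_self_le (A - A') x)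
  have hlin := abs_le.1 (abs_real_inner_le_norm (b - b') x)
  rw [hdiff, abs_le]
  constructor <;> linarith

variable [CompleteSpace E]

lemma hasGradientAt_penalizedQuadratic (hA : A.IsSymmetric) {x g : E} (hg : HasGradientAt Ψ g x)
    (b : E) : HasGradientAt (penalizedQuadratic A b Ψ) (A x - b + g) x := by
  rw [hasGradientAt_iff_hasFDerivAt]
  have hquad := ((hasFDerivAt_id x).inner ℝ A.hasFDerivAt).const_mul (1 / 2)
  have hlin := (hasFDerivAt_const b x).inner ℝ (hasFDerivAt_id x)
  refine ((hquad.sub hlin).add hg.hasFDerivAt).congr_fderiv ?_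
  ext v
  have hsymm : ⟪x, A v⟫ = ⟪A x, v⟫ := (hA x v).symm
  simp only [_root_.add_apply, _root_.sub_apply, _root_.smul_apply, smul_eq_mul, map_add, map_sub,
    ContinuousLinearMap.comp_apply, ContinuousLinearMap.prod_apply, ContinuousLinearMap.id_apply,
    fderivInnerCLM_apply, InnerProductSpace.toDual_apply_apply, _root_.zero_apply, id_eq,
    inner_zero_left, hsymm, real_inner_comm v]
  ring

lemma gradient_penalizedQuadratic (hA : A.IsSymmetric) {x : E} (hΨ : DifferentiableAt ℝ Ψ x)
    (b : E) : ∇ (penalizedQuadratic A b Ψ) x = A x - b + ∇ Ψ x :=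
  (hasGradientAt_penalizedQuadratic hA hΨ.hasGradientAt b).gradient

end QuadraticForms

lemma tendsto_zero_of_add_le_add_summable {u a e : ℕ → ℝ} {c : ℝ} (hc : ∀ n, c ≤ u n)
    (ha : ∀ n, 0 ≤ a n) (he : Summable e) (hu : ∀ n, u (n + 1) + a n ≤ u n + e n) :
    Tendsto a atTop (𝓝 0) := by
  obtain ⟨b, hb⟩ := he.hasSum.tendsto_sum_nat.bddAbove_range
  refine (summable_of_sum_range_le (c := u 0 + b - c) ha fun n ↦ ?_).tendsto_atTop_zero
  have htelescope :
      u n + ∑ i ∈ Finset.range n, a i ≤ u 0 + ∑ i ∈ Finset.range n, e i := by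
    induction n with
    | zero => simp
    | succ k ih => rw [Finset.sum_range_succ, Finset.sum_range_succ]; linarith [hu k]
  linarith [hc n, hb (Set.mem_range_self n)]

section MMSubspace

variable {E : Type*} [NormedAddCommGroup E] [InnerProductSpace ℝ E] [CompleteSpace E]

/-- The quadratic surrogate `Θ(·, x)` of `f` at `x` with curvature `A`. -/
noncomputable def quadraticSurrogate (f : E → ℝ) (A : E →L[ℝ] E) (x y : E) : ℝ :=
  f x + ⟪∇ f x, y - x⟫ + 1 / 2 * ⟪y - x, A (y - x)⟫

/-- One step `x ↦ y` of the majorize-minimize subspace algorithm: `y` minimizes the quadratic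
surrogate of `f` at `x` over a subspace `D` containing `x` and `∇ f x`. The surrogate is only
required to majorize `f` at the new point `y`. -/
structure IsMMSubspaceStep (f : E → ℝ) (A : E →L[ℝ] E) (D : Submodule ℝ E) (x y : E) : Prop where
  mem : x ∈ D
  gradient_mem : ∇ f x ∈ D
  next_mem : y ∈ D
  isMinOn : IsMinOn (quadraticSurrogate f A x) D y
  apply_le_surrogate : f y ≤ quadraticSurrogate f A x y

namespace IsMMSubspaceStep

variable {f : E → ℝ} {A : E →L[ℝ] E} {D : Submodule ℝ E} {x y : E}

lemma apply_le_apply (hstep : IsMMSubspaceStep f A D x y) : f y ≤ f x :=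
  calc f y ≤ quadraticSurrogate f A x y := hstep.apply_le_surrogate
    _ ≤ quadraticSurrogate f A x x := hstep.isMinOn hstep.mem
    _ = f x := by simp [quadraticSurrogate]

-- Compare `y` with the gradient step `x - L⁻¹ • ∇ f x`, which also lies in `D`.
lemma apply_add_sq_norm_gradient_le (hstep : IsMMSubspaceStep f A D x y) {L : ℝ} (hL : 0 < L)
    (hA : ⟪∇ f x, A (∇ f x)⟫ ≤ L * ‖∇ f x‖ ^ 2) :
    f y + 1 / (2 * L) * ‖∇ f x‖ ^ 2 ≤ f x := by
  have hmin : quadraticSurrogate f A x y ≤ quadraticSurrogate f A x (x + (-L⁻¹) • ∇ f x) :=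
    hstep.isMinOn (D.add_mem hstep.mem (D.smul_mem _ hstep.gradient_mem))
  have hquad : L⁻¹ ^ 2 * ⟪∇ f x, A (∇ f x)⟫ ≤ L⁻¹ * ‖∇ f x‖ ^ 2 :=
    calc L⁻¹ ^ 2 * ⟪∇ f x, A (∇ f x)⟫ ≤ L⁻¹ ^ 2 * (L * ‖∇ f x‖ ^ 2) := by gcongr
      _ = L⁻¹ * ‖∇ f x‖ ^ 2 := by field_simp
  have hvalue : quadraticSurrogate f A x (x + (-L⁻¹) • ∇ f x)
      = f x - L⁻¹ * ‖∇ f x‖ ^ 2 + 1 / 2 * (L⁻¹ ^ 2 * ⟪∇ f x, A (∇ f x)⟫) := by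
    simp only [quadraticSurrogate, add_sub_cancel_left, map_smul, inner_smul_left,
      inner_smul_right, conj_trivial, real_inner_self_eq_norm_sq]
    ring
  have hcoef : 1 / (2 * L) * ‖∇ f x‖ ^ 2 = 1 / 2 * (L⁻¹ * ‖∇ f x‖ ^ 2) := by field_simp
  linarith [hstep.apply_le_surrogate]

lemma inner_gradient_add_inner_eq_zero (hstep : IsMMSubspaceStep f A D x y) (hA : A.IsSymmetric)
    {v : E} (hv : v ∈ D) : ⟪∇ f x + A (y - x), v⟫ = 0 := by
  have hquad (t : ℝ) : 0 ≤ 1 / 2 * ⟪v, A v⟫ * (t * t) + ⟪∇ f x + A (y - x), v⟫ * t + 0 := by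
    have hmin : quadraticSurrogate f A x y ≤ quadraticSurrogate f A x (y + t • v) :=
      hstep.isMinOn (D.add_mem hstep.next_mem (D.smul_mem t hv))
    have hsymm : ⟪y - x, A v⟫ = ⟪A (y - x), v⟫ := (hA (y - x) v).symm
    simp only [quadraticSurrogate, add_sub_right_comm y, map_add, map_smul, inner_add_left,
      inner_add_right, inner_smul_left, inner_smul_right, conj_trivial, hsymm,
      real_inner_comm (A (y - x)) v] at hmin ⊢
    linarith
  have hdiscrim := discrim_le_zero hquad
  rw [discrim, mul_zero, sub_zero] at hdiscrim
  exact pow_eq_zero_iff two_ne_zero |>.1 (le_antisymm hdiscrim (sq_nonneg _))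

lemma mul_norm_next_le (hstep : IsMMSubspaceStep f A D x y) (hA : A.IsSymmetric) {μ : ℝ}
    (hμ : μ * ‖y‖ ^ 2 ≤ ⟪y, A y⟫) : μ * ‖y‖ ≤ ‖A x - ∇ f x‖ := by
  refine mul_norm_le_norm_of_mul_sq_norm_le_inner ?_
  have hopt := hstep.inner_gradient_add_inner_eq_zero hA hstep.next_mem
  rw [map_sub, inner_add_left, inner_sub_left, real_inner_comm] at hopt
  rw [inner_sub_left]
  linarith [real_inner_comm y (A y), real_inner_comm y (∇ f x)]

end IsMMSubspaceStep

variable {f : ℕ → E → ℝ} {A : ℕ → E →L[ℝ] E} {D : ℕ → Submodule ℝ E} {x : ℕ → E}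

theorem tendsto_gradient_zero_of_isMMSubspaceStep {L c : ℝ} {e : ℕ → ℝ} (hL : 0 < L)
    (hstep : ∀ n, IsMMSubspaceStep (f n) (A n) (D n) (x n) (x (n + 1)))
    (hA : ∀ n v, ⟪v, A n v⟫ ≤ L * ‖v‖ ^ 2) (hc : ∀ n, c ≤ f n (x n)) (he : Summable e)
    (hdrift : ∀ n, f (n + 1) (x (n + 1)) ≤ f n (x (n + 1)) + e n) :
    Tendsto (fun n ↦ ∇ (f n) (x n)) atTop (𝓝 0) := by
  have hsq : Tendsto (fun n ↦ 1 / (2 * L) * ‖∇ (f n) (x n)‖ ^ 2) atTop (𝓝 0) :=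
    tendsto_zero_of_add_le_add_summable hc (fun n ↦ by positivity) he fun n ↦ by
      linarith [hdrift n, (hstep n).apply_add_sq_norm_gradient_le hL (hA n _)]
  have hnorm : Tendsto (fun n ↦ √(2 * L * (1 / (2 * L) * ‖∇ (f n) (x n)‖ ^ 2))) atTop (𝓝 0) := by
    simpa using (hsq.const_mul (2 * L)).sqrt
  refine tendsto_zero_iff_norm_tendsto_zero.2 (hnorm.congr fun n ↦ ?_)
  rw [← mul_assoc, mul_one_div_cancel (by positivity), one_mul, Real.sqrt_sq (norm_nonneg _)]

theorem exists_norm_le_of_isMMSubspaceStep {μ c : ℝ} (hμ : 0 < μ)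
    (hstep : ∀ n, IsMMSubspaceStep (f n) (A n) (D n) (x n) (x (n + 1)))
    (hsymm : ∀ n, (A n).IsSymmetric) (hA : ∀ᶠ n in atTop, ∀ v, μ * ‖v‖ ^ 2 ≤ ⟪v, A n v⟫)
    (hc : ∀ n, ‖A n (x n) - ∇ (f n) (x n)‖ ≤ c) : ∃ C, ∀ n, ‖x n‖ ≤ C := by
  have hev : ∀ᶠ n in atTop, ‖x (n + 1)‖ ≤ c / μ := by
    filter_upwards [hA] with n hn
    rw [le_div_iff₀ hμ, mul_comm]
    exact ((hstep n).mul_norm_next_le (hsymm n) (hn _)).trans (hc n)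
  obtain ⟨C, hC⟩ := IsBoundedUnder.bddAbove_range (f := fun n ↦ ‖x n‖)
    ⟨c / μ, eventually_map.2 <| by
      rwa [← map_add_atTop_eq_nat 1, eventually_map]⟩
  exact ⟨C, fun n ↦ hC (Set.mem_range_self n)⟩

theorem exists_norm_le_of_isMMSubspaceStep_of_strongConvexOn {F : E → ℝ} {m : ℝ} (hm : 0 < m)
    (hF : StrongConvexOn Set.univ m F) (hd : DifferentiableAt ℝ F (x 0))
    (hstep : ∀ n, IsMMSubspaceStep F (A n) (D n) (x n) (x (n + 1))) : ∃ C, ∀ n, ‖x n‖ ≤ C := by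
  have hanti : Antitone fun n ↦ F (x n) := antitone_nat_of_succ_le fun n ↦ (hstep n).apply_le_apply
  refine ⟨2 / m * ‖∇ F (x 0)‖ + ‖x 0‖, fun n ↦ ?_⟩
  have hdist := norm_sub_le_of_strongConvexOn_of_apply_le hm hF (Set.mem_univ (x 0))
    (Set.mem_univ (x n)) hd.hasGradientAt (hanti n.zero_le)
  linarith [norm_sub_norm_le (x n) (x 0)]

end MMSubspace

section Convergence

variable {E : Type*} [NormedAddCommGroup E] [InnerProductSpace ℝ E] [CompleteSpace E]
  {R : E →L[ℝ] E} {r : E} {Ψ : E → ℝ} {Rn : ℕ → E →L[ℝ] E} {rn : ℕ → E} {h : ℕ → E}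

lemma tendsto_gradient_penalizedQuadratic_sub {C : ℝ} (hΨd : Differentiable ℝ Ψ)
    (hRn : ∀ n, (Rn n).IsSymmetric) (hrlim : Tendsto rn atTop (𝓝 r))
    (hRlim : Tendsto Rn atTop (𝓝 R)) (hC : ∀ n, ‖h n‖ ≤ C) :
    Tendsto (fun n ↦ ∇ (penalizedQuadratic R r Ψ) (h n)
      - ∇ (penalizedQuadratic (Rn n) (rn n) Ψ) (h n)) atTop (𝓝 0) := by
  have hbound : Tendsto (fun n ↦ ‖R - Rn n‖ * C + ‖r - rn n‖) atTop (𝓝 0) := by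
    simpa using ((hRlim.const_sub R).norm.mul_const C).add (hrlim.const_sub r).norm
  refine squeeze_zero_norm (fun n ↦ ?_) hbound
  rw [gradient_penalizedQuadratic (isSymmetric_of_tendsto hRn hRlim) (hΨd _),
    gradient_penalizedQuadratic (hRn n) (hΨd _)]
  calc ‖R (h n) - r + ∇ Ψ (h n) - (Rn n (h n) - rn n + ∇ Ψ (h n))‖
      = ‖(R - Rn n) (h n) - (r - rn n)‖ := by rw [_root_.sub_apply]; congr 1; abel
    _ ≤ ‖(R - Rn n) (h n)‖ + ‖r - rn n‖ := norm_sub_le _ _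
    _ ≤ ‖R - Rn n‖ * C + ‖r - rn n‖ := by gcongr; exact (R - Rn n).le_opNorm_of_le (hC n)

variable {B : E → E →L[ℝ] E} {D : ℕ → Submodule ℝ E}

lemma exists_forall_le_penalizedQuadratic_of_tendsto {C : ℝ} (hΨ : ConvexOn ℝ Set.univ Ψ)
    (hΨd : DifferentiableAt ℝ Ψ 0) (hrlim : Tendsto rn atTop (𝓝 r))
    (hRlim : Tendsto Rn atTop (𝓝 R)) (hC : ∀ n, ‖h n‖ ≤ C) :
    ∃ c, ∀ n, c ≤ penalizedQuadratic (Rn n) (rn n) Ψ (h n) := by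
  have hlim : Tendsto (fun n ↦ 1 / 2 * ‖Rn n‖ * C ^ 2 + ‖rn n‖ * C) atTop
      (𝓝 (1 / 2 * ‖R‖ * C ^ 2 + ‖r‖ * C)) :=
    ((hRlim.norm.const_mul _).mul_const _).add (hrlim.norm.mul_const _)
  obtain ⟨K, hK⟩ := hlim.bddAbove_range
  obtain ⟨c, hc⟩ := exists_le_apply_of_convexOn_of_norm_le hΨ hΨd C
  refine ⟨c - K, fun n ↦ ?_⟩
  have hquad : |penalizedQuadratic (Rn n) (rn n) Ψ (h n) - Ψ (h n)| ≤ K :=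
    calc _ ≤ 1 / 2 * ‖Rn n‖ * ‖h n‖ ^ 2 + ‖rn n‖ * ‖h n‖ := by
          simpa [penalizedQuadratic] using abs_penalizedQuadratic_sub_le (Rn n) 0 (rn n) 0 Ψ (h n)
      _ ≤ 1 / 2 * ‖Rn n‖ * C ^ 2 + ‖rn n‖ * C := by gcongr <;> exact hC n
      _ ≤ K := hK (Set.mem_range_self n)
  linarith [(abs_le.1 hquad).1, hc _ (hC n)]

variable {B : E → E →L[ℝ] E} {D : ℕ → Submodule ℝ E}

lemma tendsto_gradient_zero_of_isMMSubspaceStep_penalizedQuadratic {β C : ℝ}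
    (hΨ : ConvexOn ℝ Set.univ Ψ) (hΨd : DifferentiableAt ℝ Ψ 0)
    (hBβ : ∀ x v, ⟪v, B x v⟫ ≤ β * ‖v‖ ^ 2)
    (hstep : ∀ n, IsMMSubspaceStep (penalizedQuadratic (Rn n) (rn n) Ψ) (Rn n + B (h n)) (D n)
      (h n) (h (n + 1)))
    (hrsum : Summable fun n ↦ ‖rn n - rn (n + 1)‖) (hRsum : Summable fun n ↦ ‖Rn n - Rn (n + 1)‖)
    (hrlim : Tendsto rn atTop (𝓝 r)) (hRlim : Tendsto Rn atTop (𝓝 R)) (hC : ∀ n, ‖h n‖ ≤ C) :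
    Tendsto (fun n ↦ ∇ (penalizedQuadratic (Rn n) (rn n) Ψ) (h n)) atTop (𝓝 0) := by
  obtain ⟨L, hL, hcurv⟩ := exists_pos_forall_inner_add_apply_le hRlim hBβ
  obtain ⟨c, hc⟩ := exists_forall_le_penalizedQuadratic_of_tendsto hΨ hΨd hrlim hRlim hC
  refine tendsto_gradient_zero_of_isMMSubspaceStep hL hstep (fun n ↦ hcurv n (h n)) hc
    (((hRsum.mul_left (1 / 2)).mul_right (C ^ 2)).add (hrsum.mul_right C)) fun n ↦ ?_
  have hdrift : |penalizedQuadratic (Rn n) (rn n) Ψ (h (n + 1))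
      - penalizedQuadratic (Rn (n + 1)) (rn (n + 1)) Ψ (h (n + 1))|
      ≤ 1 / 2 * ‖Rn n - Rn (n + 1)‖ * C ^ 2 + ‖rn n - rn (n + 1)‖ * C :=
    (abs_penalizedQuadratic_sub_le _ _ _ _ _ _).trans (by gcongr <;> exact hC (n + 1))
  linarith [(abs_le.1 hdrift).1]

lemma exists_norm_le_of_isMMSubspaceStep_penalizedQuadratic {m c : ℝ} (hm : 0 < m)
    (hR : ∀ v, m * ‖v‖ ^ 2 ≤ ⟪v, R v⟫) (hΨd : Differentiable ℝ Ψ)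
    (hRn : ∀ n, (Rn n).IsSymmetric) (hB : ∀ x, (B x).IsPositive)
    (hstep : ∀ n, IsMMSubspaceStep (penalizedQuadratic (Rn n) (rn n) Ψ) (Rn n + B (h n)) (D n)
      (h n) (h (n + 1)))
    (hrlim : Tendsto rn atTop (𝓝 r)) (hRlim : Tendsto Rn atTop (𝓝 R))
    (hc : ∀ x, ‖B x x - ∇ Ψ x‖ ≤ c) : ∃ C, ∀ n, ‖h n‖ ≤ C := by
  obtain ⟨σ, hσ⟩ := hrlim.norm.bddAbove_range
  refine exists_norm_le_of_isMMSubspaceStep (c := c + σ) (half_pos hm) hstep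
    (fun n ↦ (hRn n).add (hB _).isSymmetric) ?_ fun n ↦ ?_
  · have hcoer := eventually_mul_sq_norm_le_inner_of_tendsto (half_lt_self hm) hR hRlim
    filter_upwards [hcoer] with n hn v
    rw [_root_.add_apply, inner_add_right]
    linarith [hn v, (hB (h n)).inner_nonneg_right v]
  · rw [gradient_penalizedQuadratic (hRn n) (hΨd _)]
    calc ‖(Rn n + B (h n)) (h n) - (Rn n (h n) - rn n + ∇ Ψ (h n))‖
        = ‖B (h n) (h n) - ∇ Ψ (h n) + rn n‖ := by
          rw [_root_.add_apply]; congr 1; abel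
      _ ≤ ‖B (h n) (h n) - ∇ Ψ (h n)‖ + ‖rn n‖ := norm_add_le _ _
      _ ≤ c + σ := add_le_add (hc _) (hσ (Set.mem_range_self n))

theorem mm_iterates_converge_to_unique_minimizer_general {m β : ℝ} (hm : 0 < m)
    (hR : ∀ v, m * ‖v‖ ^ 2 ≤ ⟪v, R v⟫) (hΨ : ConvexOn ℝ Set.univ Ψ) (hΨd : Differentiable ℝ Ψ)
    (hRn : ∀ n, (Rn n).IsSymmetric) (hB : ∀ x, (B x).IsPositive)
    (hBβ : ∀ x v, ⟪v, B x v⟫ ≤ β * ‖v‖ ^ 2)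
    (hstep : ∀ n, IsMMSubspaceStep (penalizedQuadratic (Rn n) (rn n) Ψ) (Rn n + B (h n)) (D n)
      (h n) (h (n + 1)))
    (hrsum : Summable fun n ↦ ‖rn n - rn (n + 1)‖) (hRsum : Summable fun n ↦ ‖Rn n - Rn (n + 1)‖)
    (hrlim : Tendsto rn atTop (𝓝 r)) (hRlim : Tendsto Rn atTop (𝓝 R))
    (hdrift : (∀ n, rn n = r ∧ Rn n = R) ∨ ∃ c, ∀ x, ‖B x x - ∇ Ψ x‖ ≤ c) :
    StrongConvexOn Set.univ m (penalizedQuadratic R r Ψ) ∧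
      ∃ z, (∀ x, penalizedQuadratic R r Ψ z ≤ penalizedQuadratic R r Ψ x) ∧
        (∀ y, (∀ x, penalizedQuadratic R r Ψ y ≤ penalizedQuadratic R r Ψ x) → y = z) ∧
        Tendsto h atTop (𝓝 z) := by
  have hF := strongConvexOn_penalizedQuadratic hR hΨ r
  have hFd : Differentiable ℝ (penalizedQuadratic R r Ψ) := fun x ↦
    (hasGradientAt_penalizedQuadratic (isSymmetric_of_tendsto hRn hRlim) (hΨd x).hasGradientAt
      r).differentiableAt
  obtain ⟨C, hC⟩ : ∃ C, ∀ n, ‖h n‖ ≤ C := by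
    rcases hdrift with hconst | ⟨c, hc⟩
    · simp only [(hconst _).1, (hconst _).2] at hstep
      exact exists_norm_le_of_isMMSubspaceStep_of_strongConvexOn hm hF (hFd _) hstep
    · exact exists_norm_le_of_isMMSubspaceStep_penalizedQuadratic hm hR hΨd hRn hB hstep hrlim
        hRlim hc
  have hgrad : Tendsto (fun n ↦ ∇ (penalizedQuadratic R r Ψ) (h n)) atTop (𝓝 0) := by
    simpa using (tendsto_gradient_zero_of_isMMSubspaceStep_penalizedQuadratic hΨ (hΨd 0) hBβ hstep
      hrsum hRsum hrlim hRlim hC).add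
      (tendsto_gradient_penalizedQuadratic_sub hΨd hRn hrlim hRlim hC)
  obtain ⟨z, hz, hlim⟩ := exists_tendsto_minimizer_of_tendsto_gradient_zero hm hF hFd hgrad
  refine ⟨hF, z, hz, fun y hy ↦ ?_, hlim⟩
  exact (hF.strictConvexOn hm).eq_of_isMinOn (fun x _ ↦ hy x) (fun x _ ↦ hz x) (Set.mem_univ y)
    (Set.mem_univ z)

end Convergence

section Euclidean

variable {N : ℕ}

lemma ofEuc_dotProduct_ofEuc (a b : EuclideanSpace ℝ (Fin N)) : ofEuc a ⬝ᵥ ofEuc b = ⟪a, b⟫ := by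
  rw [EuclideanSpace.inner_eq_star_dotProduct, dotProduct_comm]
  rfl

lemma qf_eq_inner (M : Matrix (Fin N) (Fin N) ℝ) (v : EuclideanSpace ℝ (Fin N)) :
    qf M v = ⟪v, toEuclideanCLM (𝕜 := ℝ) M v⟫ :=
  (inner_toEuclideanCLM M v v).symm

lemma mulE_eq_toEuclideanCLM (M : Matrix (Fin N) (Fin N) ℝ) (v : EuclideanSpace ℝ (Fin N)) :
    mulE M v = toEuclideanCLM (𝕜 := ℝ) M v :=
  rfl

lemma rangeD_eq_range {K : ℕ} (D : Matrix (Fin N) (Fin K) ℝ) :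
    rangeD D = LinearMap.range (toEuclideanLin D) := by
  ext x
  exact ⟨fun ⟨u, hu⟩ ↦ ⟨toEuc u, hu.symm⟩, fun ⟨u, hu⟩ ↦ ⟨ofEuc u, hu.symm⟩⟩

variable {n : Type*} [Fintype n] [DecidableEq n] {M : Matrix n n ℝ}

lemma isPositive_toEuclideanCLM (hM : M.PosSemidef) :
    (toEuclideanCLM (𝕜 := ℝ) M).IsPositive := by
  rw [← ContinuousLinearMap.isPositive_toLinearMap_iff, coe_toEuclideanCLM_eq_toEuclideanLin]
  exact isPositive_toEuclideanLin_iff.2 hM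

lemma exists_pos_mul_sq_norm_le_inner_toEuclideanCLM (hM : M.PosDef) :
    ∃ m > 0, ∀ v, m * ‖v‖ ^ 2 ≤ ⟪v, toEuclideanCLM (𝕜 := ℝ) M v⟫ := by
  refine exists_pos_mul_sq_norm_le_inner_of_forall_pos _ fun v hv ↦ ?_
  rw [inner_toEuclideanCLM]
  exact hM.dotProduct_mulVec_pos (x := v.ofLp) (by simpa using hv)

lemma inner_toEuclideanCLM_le_of_posSemidef_sub {V : Matrix n n ℝ}
    (hMV : (V - M).PosSemidef) (v : EuclideanSpace ℝ n) :
    ⟪v, toEuclideanCLM (𝕜 := ℝ) M v⟫ ≤ ‖toEuclideanCLM (𝕜 := ℝ) V‖ * ‖v‖ ^ 2 := by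
  have hdiff := (isPositive_toEuclideanCLM hMV).inner_nonneg_right v
  have hV := (le_abs_self _).trans (abs_inner_apply_self_le (toEuclideanCLM (𝕜 := ℝ) V) v)
  rw [map_sub, _root_.sub_apply, inner_sub_right] at hdiff
  linarith

lemma continuous_toEuclideanCLM :
    Continuous (toEuclideanCLM (n := n) (𝕜 := ℝ)) :=
  (toEuclideanCLM (n := n) (𝕜 := ℝ)).toAlgEquiv.toLinearMap.continuous_of_finiteDimensional

lemma tendsto_toEuclideanCLM {ι : Type*} {l : Filter ι} {T : ι → Matrix n n ℝ}
    (hT : ∀ i j, Tendsto (fun k ↦ T k i j) l (𝓝 (M i j))) :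
    Tendsto (fun k ↦ toEuclideanCLM (𝕜 := ℝ) (T k)) l (𝓝 (toEuclideanCLM (𝕜 := ℝ) M)) :=
  (continuous_toEuclideanCLM.tendsto M).comp
    (tendsto_pi_nhds.2 fun i ↦ tendsto_pi_nhds.2 fun j ↦ hT i j)

lemma summable_norm_toEuclideanCLM {ι : Type*} {T : ι → Matrix n n ℝ}
    (hT : ∀ i j, Summable fun k ↦ |T k i j|) :
    Summable fun k ↦ ‖toEuclideanCLM (𝕜 := ℝ) (T k)‖ := by
  have hsum : Summable T := Pi.summable.2 fun i ↦ Pi.summable.2 fun j ↦ (hT i j).of_abs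
  exact (hsum.map (toEuclideanCLM (n := n) (𝕜 := ℝ)) continuous_toEuclideanCLM).norm

end Euclidean

theorem mm_iterates_converge_to_unique_minimizer
    {N : ℕ} (hN : 0 < N)
    (R : Matrix (Fin N) (Fin N) ℝ) (hRpd : R.PosDef)
    (r : EuclideanSpace ℝ (Fin N))
    (Ψ : EuclideanSpace ℝ (Fin N) → ℝ)
    (hΨbdd : BddBelow (Set.range Ψ))
    (hΨconv : ConvexOn ℝ Set.univ Ψ)
    (hΨC2 : ContDiff ℝ 2 Ψ)
    (gradΨ : EuclideanSpace ℝ (Fin N) → EuclideanSpace ℝ (Fin N))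
    (hgradΨ : ∀ x, HasGradientAt Ψ (gradΨ x) x)
    (hessΨ : EuclideanSpace ℝ (Fin N) → Matrix (Fin N) (Fin N) ℝ)
    (hhessΨ : ∀ x, HasFDerivAt gradΨ
      (LinearMap.toContinuousLinearMap (Matrix.toEuclideanLin (hessΨ x))) x)
    (F : EuclideanSpace ℝ (Fin N) → ℝ)
    (hF : ∀ x, F x = (1/2) * qf R x - ofEuc r ⬝ᵥ ofEuc x + Ψ x)
    (Rn : ℕ → Matrix (Fin N) (Fin N) ℝ) (hRnpsd : ∀ n, (Rn n).PosSemidef)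
    (rn : ℕ → EuclideanSpace ℝ (Fin N))
    (Fn : ℕ → EuclideanSpace ℝ (Fin N) → ℝ)
    (hFn : ∀ n x, Fn n x = (1/2) * qf (Rn n) x - ofEuc (rn n) ⬝ᵥ ofEuc x + Ψ x)
    (B : EuclideanSpace ℝ (Fin N) → Matrix (Fin N) (Fin N) ℝ)
    (hBpsd : ∀ x, (B x).PosSemidef)
    (An : ℕ → EuclideanSpace ℝ (Fin N) → Matrix (Fin N) (Fin N) ℝ)
    (hAn : ∀ n x, An n x = Rn n + B x)
    (gradFn : ℕ → EuclideanSpace ℝ (Fin N) → EuclideanSpace ℝ (Fin N))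
    (hgradFn : ∀ n x, HasGradientAt (Fn n) (gradFn n x) x)
    (Θ : ℕ → EuclideanSpace ℝ (Fin N) → EuclideanSpace ℝ (Fin N) → ℝ)
    (hΘ : ∀ n x y, Θ n x y =
      Fn n y + ofEuc (gradFn n y) ⬝ᵥ ofEuc (x - y) + (1/2) * qf (An n y) (x - y))
    (M : ℕ → ℕ) (D : (n : ℕ) → Matrix (Fin N) (Fin (M n)) ℝ)
    (h : ℕ → EuclideanSpace ℝ (Fin N))
    (halg : ∀ n, h (n+1) ∈ rangeD (D n) ∧
      ∀ y ∈ rangeD (D n), Θ n (h (n+1)) (h n) ≤ Θ n y (h n))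
    (hmaj : ∀ n x, Fn n x ≤ Θ n x (h n))
    (ha1r : Summable (fun n => ‖rn n - rn (n+1)‖))
    (ha1R : ∀ i j, Summable (fun n => |Rn n i j - Rn (n+1) i j|))
    (ha1rlim : Tendsto rn atTop (𝓝 r))
    (ha1Rlim : ∀ i j, Tendsto (fun n => Rn n i j) atTop (𝓝 (R i j)))
    (ha2i : ∀ n, gradFn n (h n) ∈ rangeD (D n) ∧ h n ∈ rangeD (D n))
    (V : Matrix (Fin N) (Fin N) ℝ) (hVpd : V.PosDef)
    (ha2ii : ∀ x, (B x - hessΨ x).PosSemidef ∧ (V - B x).PosSemidef)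
    (ha2iii : (∀ n, rn n = r ∧ Rn n = R) ∨
      (∃ c : ℝ, ∀ x, ‖mulE (B x) x - gradΨ x‖ ≤ c))
    :
    (∃ m : ℝ, 0 < m ∧ StrongConvexOn Set.univ m F) ∧
    ∃ hhat : EuclideanSpace ℝ (Fin N),
      (∀ x, F hhat ≤ F x) ∧ (∀ y, (∀ x, F y ≤ F x) → y = hhat) ∧
      Tendsto h atTop (𝓝 hhat) := by
  obtain rfl : gradΨ = ∇ Ψ := funext fun x ↦ (hgradΨ x).gradient.symm
  obtain rfl : gradFn = fun n ↦ ∇ (Fn n) := funext₂ fun n x ↦ (hgradFn n x).gradient.symm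
  obtain rfl : F = penalizedQuadratic (toEuclideanCLM (𝕜 := ℝ) R) r Ψ := funext fun x ↦ by
    rw [hF, qf_eq_inner, ofEuc_dotProduct_ofEuc, penalizedQuadratic]
  obtain rfl : Fn = fun n ↦ penalizedQuadratic (toEuclideanCLM (𝕜 := ℝ) (Rn n)) (rn n) Ψ :=
    funext₂ fun n x ↦ by rw [hFn, qf_eq_inner, ofEuc_dotProduct_ofEuc, penalizedQuadratic]
  simp only [hΘ, hAn, qf_eq_inner, ofEuc_dotProduct_ofEuc, rangeD_eq_range, mulE_eq_toEuclideanCLM,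
    map_add] at halg hmaj ha2i ha2iii
  obtain ⟨m, hm, hR⟩ := exists_pos_mul_sq_norm_le_inner_toEuclideanCLM hRpd
  have hconv := mm_iterates_converge_to_unique_minimizer_general
    (B := fun x ↦ toEuclideanCLM (𝕜 := ℝ) (B x)) hm hR hΨconv
    (hΨC2.differentiable two_ne_zero) (fun n ↦ (isPositive_toEuclideanCLM (hRnpsd n)).isSymmetric)
    (fun x ↦ isPositive_toEuclideanCLM (hBpsd x))
    (fun x ↦ inner_toEuclideanCLM_le_of_posSemidef_sub (ha2ii x).2)
    (fun n ↦ ⟨(ha2i n).2, (ha2i n).1, (halg n).1, (halg n).2, hmaj n _⟩) ha1r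
    (by simpa only [map_sub] using
      summable_norm_toEuclideanCLM (T := fun n ↦ Rn n - Rn (n + 1)) ha1R)
    ha1rlim (tendsto_toEuclideanCLM ha1Rlim)
    (ha2iii.imp_left fun hconst n ↦ ⟨(hconst n).1, congrArg _ (hconst n).2⟩)
  exact ⟨⟨m, hm, hconv.1⟩, hconv.2⟩
end

section
/- Suppose Assumptions 1 and 2 hold, and let ε > 0 be such that εI_N ≺ R (Loewner order). Then there exists n_ε ≥ 1 such that for every n ≥ n_ε with ∇F_n(h_n) ≠ 0, one has ∇²F_n(h_n) ⪰ R − εI_N and F_n(h_{n+1}) − inf F_n ≤ θ_n (F_n(h_n) − inf F_n), where θ_n = 1 − (1 + ε)^{−1} θ̃_n and θ̃_n = (∇F_n(h_n)ᵀ C_n(h_n) ∇F_n(h_n)) / (∇F_n(h_n)ᵀ (∇²F_n(h_n))⁻¹ ∇F_n(h_n)), with C_n(h_n) = D_n (D_nᵀ A_n(h_n) D_n)† D_nᵀ and (·)† the Moore–Penrose pseudo-inverse. -/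
open Matrix Filter Topology

/-!
A step of the algorithm decreases `F n` by at least a fixed multiple of `‖∇F n (h n)‖ ^ 2`, and
passing from `F n` to `F (n + 1)` costs a summable amount as long as the iterates stay bounded,
which the coercivity of the limit matrix ensures in either case of Assumption 2 (iii). Hence
`∇F n (h n) → 0`. By strong convexity, the sublevel set of `F n` at `h n` then lies in a ball around
`h n` whose radius tends to `0`; there, uniform continuity of `∇²Ψ` gives
`∇²F n ≥ (1 + ε)⁻¹ ∇²F n (h n)`, so a second order Taylor bound yields
`F n (h n) - inf F n ≤ (1 + ε) / 2 * gᵀ (∇²F n (h n))⁻¹ g` with `g = ∇F n (h n)`. On the other hand,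
minimizing the surrogate over the range of `D n` decreases `F n` by at least `1 / 2 * gᵀ C_n g`.
The quotient of these two bounds is the fraction of the gap that the step is sure to remove.
-/

open scoped InnerProductSpace

section Calculus

theorem add_deriv_add_half_le {φ φ' φ'' : ℝ → ℝ} {c : ℝ} (hφ : ∀ t, HasDerivAt φ (φ' t) t)
    (hφ' : ∀ t, HasDerivAt φ' (φ'' t) t) (hc : ∀ t ∈ Set.Icc (0 : ℝ) 1, c ≤ φ'' t) :
    φ 0 + φ' 0 + c / 2 ≤ φ 1 := by
  have hψ (t : ℝ) : HasDerivAt (fun t => φ t - c / 2 * t ^ 2) (φ' t - c * t) t :=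
    ((hφ t).sub ((hasDerivAt_pow 2 t).const_mul (c / 2))).congr_deriv (by simp; ring)
  have hψ' (t : ℝ) : HasDerivAt (fun t => φ' t - c * t) (φ'' t - c) t :=
    ((hφ' t).sub ((hasDerivAt_id t).const_mul c)).congr_deriv (by simp)
  have hconv : ConvexOn ℝ (Set.Icc (0 : ℝ) 1) (fun t => φ t - c / 2 * t ^ 2) :=
    convexOn_of_hasDerivWithinAt2_nonneg (convex_Icc 0 1)
      (fun t _ => (hψ t).continuousAt.continuousWithinAt) (fun t _ => (hψ t).hasDerivWithinAt)
      (fun t _ => (hψ' t).hasDerivWithinAt)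
      fun t ht => sub_nonneg.2 (hc t (interior_subset ht))
  have hslope := hconv.le_slope_of_hasDerivAt (Set.left_mem_Icc.2 zero_le_one)
    (Set.right_mem_Icc.2 zero_le_one) zero_lt_one (hψ 0)
  simp only [slope_def_field] at hslope
  linarith

variable {E : Type*} [NormedAddCommGroup E] [InnerProductSpace ℝ E]

theorem hasDerivAt_add_smul (x v : E) (t : ℝ) : HasDerivAt (fun t : ℝ => x + t • v) v t := by
  simpa using ((hasDerivAt_id t).smul_const v).const_add x

theorem hasDerivAt_inner_comp_line {g : E → E} {H : E → E →L[ℝ] E}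
    (hH : ∀ x, HasFDerivAt g (H x) x) (x v : E) (t : ℝ) :
    HasDerivAt (fun t : ℝ => ⟪g (x + t • v), v⟫_ℝ) ⟪H (x + t • v) v, v⟫_ℝ t := by
  simpa using ((hH (x + t • v)).comp_hasDerivAt t (hasDerivAt_add_smul x v t)).inner ℝ
    (hasDerivAt_const t v)

variable [CompleteSpace E]

theorem hasDerivAt_comp_line {f : E → ℝ} {g : E → E} (hg : ∀ x, HasGradientAt f (g x) x)
    (x v : E) (t : ℝ) : HasDerivAt (fun t : ℝ => f (x + t • v)) ⟪g (x + t • v), v⟫_ℝ t :=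
  ((hg (x + t • v)).hasFDerivAt.comp_hasDerivAt t (hasDerivAt_add_smul x v t)).congr_deriv
    (by simp)

theorem inner_hessian_nonneg_of_convexOn {f : E → ℝ} {g : E → E} {H : E → E →L[ℝ] E}
    (hg : ∀ x, HasGradientAt f (g x) x) (hH : ∀ x, HasFDerivAt g (H x) x)
    (hf : ConvexOn ℝ Set.univ f) (x v : E) : 0 ≤ ⟪H x v, v⟫_ℝ := by
  have hline : ConvexOn ℝ Set.univ (fun t : ℝ => f (x + t • v)) := by
    simpa [Function.comp_def, AffineMap.lineMap_apply, add_comm] using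
      hf.comp_affineMap (AffineMap.lineMap x (x + v))
  have hmono : Monotone fun t : ℝ => ⟪g (x + t • v), v⟫_ℝ := by
    rw [← monotoneOn_univ]
    refine (hline.monotoneOn_deriv
      fun t _ => (hasDerivAt_comp_line hg x v t).differentiableAt).congr fun t _ => ?_
    exact (hasDerivAt_comp_line hg x v t).deriv
  simpa [(hasDerivAt_inner_comp_line hH x v 0).deriv] using hmono.deriv_nonneg (x := 0)

theorem continuous_hessian_of_contDiff_two {f : E → ℝ} {g : E → E} {H : E → E →L[ℝ] E}
    (hf : ContDiff ℝ 2 f) (hg : ∀ x, HasGradientAt f (g x) x)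
    (hH : ∀ x, HasFDerivAt g (H x) x) : Continuous H := by
  have hgrad : g = fun x => (InnerProductSpace.toDual ℝ E).symm (fderiv ℝ f x) :=
    (gradient_eq hg).symm
  have hC1 : ContDiff ℝ 1 g := by
    rw [hgrad]
    exact (InnerProductSpace.toDual ℝ E).symm.contDiff.comp (hf.fderiv_right (by norm_num))
  have hHess : H = fderiv ℝ g := funext fun x => (hH x).fderiv.symm
  exact hHess ▸ hC1.continuous_fderiv one_ne_zero

end Calculus

theorem summable_of_le_sub_add {a b e : ℕ → ℝ} (ha : BddBelow (Set.range a)) (hb : ∀ n, 0 ≤ b n)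
    (he : Summable e) (hab : ∀ n, a (n + 1) ≤ a n - b n + e n) : Summable b := by
  obtain ⟨m, hm⟩ := ha
  obtain ⟨s, hs⟩ := he.hasSum.tendsto_sum_nat.bddAbove_range
  have htelescope (n : ℕ) :
      ∑ i ∈ Finset.range n, b i ≤ a 0 - a n + ∑ i ∈ Finset.range n, e i := by
    induction n with
    | zero => simp
    | succ n ih =>
      rw [Finset.sum_range_succ, Finset.sum_range_succ]
      linarith [hab n]
  refine summable_of_sum_range_le (c := a 0 - m + s) hb fun n => ?_
  linarith [htelescope n, hm ⟨n, rfl⟩, hs ⟨n, rfl⟩]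

section QuadModel

variable {E : Type*} [NormedAddCommGroup E] [InnerProductSpace ℝ E]

/-- The quadratic `v ↦ ⟪g, v⟫ + ½ ⟪A v, v⟫`. With `g` the gradient of `f` at `y`, the number
`f y + quadModel A g (x - y)` is the value at `x` of the quadratic surrogate of `f` at `y` with
curvature `A`. -/
noncomputable def quadModel (A : E →L[ℝ] E) (g v : E) : ℝ :=
  ⟪g, v⟫_ℝ + 1 / 2 * ⟪A v, v⟫_ℝ

theorem quadModel_zero (A : E →L[ℝ] E) (g : E) : quadModel A g 0 = 0 := by
  simp [quadModel]

theorem quadModel_sub_sub (A A' : E →L[ℝ] E) (g g' v : E) :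
    quadModel (A - A') (g - g') v = quadModel A g v - quadModel A' g' v := by
  simp only [quadModel, _root_.sub_apply, inner_sub_left]
  ring

theorem quadModel_add {A : E →L[ℝ] E} (hA : (A : E →ₗ[ℝ] E).IsSymmetric) (g v w : E) :
    quadModel A g (v + w) = quadModel A g w + quadModel A (g + A w) v := by
  have hswap : ⟪A v, w⟫_ℝ = ⟪A w, v⟫_ℝ := (hA v w).trans (real_inner_comm _ _)
  simp only [quadModel, map_add, inner_add_left, inner_add_right, hswap]
  ring

theorem inner_apply_self_le (A : E →L[ℝ] E) (v : E) : ⟪A v, v⟫_ℝ ≤ ‖A‖ * ‖v‖ ^ 2 :=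
  calc ⟪A v, v⟫_ℝ ≤ ‖A v‖ * ‖v‖ := real_inner_le_norm _ _
    _ ≤ ‖A‖ * ‖v‖ * ‖v‖ := by gcongr; exact A.le_opNorm v
    _ = ‖A‖ * ‖v‖ ^ 2 := by ring

theorem quadModel_le (A : E →L[ℝ] E) (g v : E) :
    quadModel A g v ≤ ‖g‖ * ‖v‖ + 1 / 2 * (‖A‖ * ‖v‖ ^ 2) := by
  unfold quadModel
  gcongr
  exacts [real_inner_le_norm _ _, inner_apply_self_le A v]

theorem norm_le_of_quadModel_nonpos {A : E →L[ℝ] E} {μ : ℝ} (hμ : 0 < μ)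
    (hA : ∀ v, μ * ‖v‖ ^ 2 ≤ ⟪A v, v⟫_ℝ) {g v : E} (hv : quadModel A g v ≤ 0) :
    ‖v‖ ≤ 2 / μ * ‖g‖ := by
  have hinner : -(‖g‖ * ‖v‖) ≤ ⟪g, v⟫_ℝ := (abs_le.1 (abs_real_inner_le_norm g v)).1
  have hprod : ‖v‖ * (μ * ‖v‖) ≤ ‖v‖ * (2 * ‖g‖) := by
    unfold quadModel at hv
    linarith [hA v]
  rcases (norm_nonneg v).eq_or_lt with hv0 | hv0
  · rw [← hv0]
    positivity
  · rw [div_mul_eq_mul_div, le_div_iff₀' hμ]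
    exact le_of_mul_le_mul_left hprod hv0

theorem quadModel_neg_inv_smul_le {A : E →L[ℝ] E} {L : ℝ} (hL : 0 < L) {g : E}
    (hA : ⟪A g, g⟫_ℝ ≤ L * ‖g‖ ^ 2) : quadModel A g (-(L⁻¹ • g)) ≤ -(‖g‖ ^ 2 / (2 * L)) := by
  have hvalue : quadModel A g (-(L⁻¹ • g)) =
      -(L⁻¹ * ‖g‖ ^ 2) + L⁻¹ ^ 2 / 2 * ⟪A g, g⟫_ℝ := by
    simp only [quadModel, map_neg, map_smul, inner_neg_left, inner_neg_right,
      real_inner_smul_left, real_inner_smul_right, real_inner_self_eq_norm_sq]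
    ring
  calc quadModel A g (-(L⁻¹ • g)) ≤ -(L⁻¹ * ‖g‖ ^ 2) + L⁻¹ ^ 2 / 2 * (L * ‖g‖ ^ 2) := by
        rw [hvalue]
        gcongr
    _ = -(‖g‖ ^ 2 / (2 * L)) := by field_simp; ring

theorem neg_inner_le_quadModel {S : E →L[ℝ] E} (hS : S.IsPositive) {κ : ℝ} (hκ : 0 < κ) {g w : E}
    (hw : S w = g) (v : E) : -(κ / 2 * ⟪g, w⟫_ℝ) ≤ quadModel (κ⁻¹ • S) g v := by
  have hswap : ⟪S v, w⟫_ℝ = ⟪g, v⟫_ℝ :=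
    ((hS.isSymmetric v w).trans (real_inner_comm _ _)).trans (by rw [← hw]; rfl)
  have hsquare : 0 ≤ (2 * κ)⁻¹ * ⟪S (v + κ • w), v + κ • w⟫_ℝ :=
    mul_nonneg (by positivity) (hS.inner_nonneg_left _)
  refine sub_nonneg.1 (hsquare.trans_eq ?_)
  simp only [quadModel, map_add, map_smul, _root_.smul_apply, inner_add_left, inner_add_right,
    real_inner_smul_left, real_inner_smul_right, hswap, hw]
  field_simp
  ring

section Taylor

variable [CompleteSpace E] {f : E → ℝ} {g : E → E} {H : E → E →L[ℝ] E}

theorem add_quadModel_le (hg : ∀ x, HasGradientAt f (g x) x) (hH : ∀ x, HasFDerivAt g (H x) x)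
    {S : E →L[ℝ] E} {x y : E}
    (hS : ∀ t ∈ Set.Icc (0 : ℝ) 1, ⟪S (x - y), x - y⟫_ℝ ≤ ⟪H (y + t • (x - y)) (x - y), x - y⟫_ℝ) :
    f y + quadModel S (g y) (x - y) ≤ f x := by
  have htaylor := add_deriv_add_half_le (hasDerivAt_comp_line hg y (x - y))
    (hasDerivAt_inner_comp_line hH y (x - y)) hS
  simp only [zero_smul, add_zero, one_smul, add_sub_cancel] at htaylor
  unfold quadModel
  linarith

theorem norm_sub_le_norm_gradient_of_le {μ : ℝ} (hμ : 0 < μ) (hg : ∀ x, HasGradientAt f (g x) x)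
    (hH : ∀ x, HasFDerivAt g (H x) x) (hcoer : ∀ x v, μ * ‖v‖ ^ 2 ≤ ⟪H x v, v⟫_ℝ) {x y : E}
    (hxy : f x ≤ f y) : ‖x - y‖ ≤ 2 / μ * ‖g y‖ := by
  have hinner (v : E) : ⟪(μ • ContinuousLinearMap.id ℝ E) v, v⟫_ℝ = μ * ‖v‖ ^ 2 := by
    simp [real_inner_smul_left]
  refine norm_le_of_quadModel_nonpos (A := μ • ContinuousLinearMap.id ℝ E) hμ
    (fun v => (hinner v).ge) ?_
  have := add_quadModel_le hg hH (S := μ • ContinuousLinearMap.id ℝ E) (x := x) (y := y)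
    fun t _ => (hinner _).trans_le (hcoer _ _)
  linarith

theorem sub_inner_le_of_hessian_near {μ κ δ : ℝ} (hμ : 0 < μ) (hκ : 0 < κ)
    (hg : ∀ x, HasGradientAt f (g x) x) (hH : ∀ x, HasFDerivAt g (H x) x)
    (hcoer : ∀ x v, μ * ‖v‖ ^ 2 ≤ ⟪H x v, v⟫_ℝ) {y w : E} (hpos : (H y).IsPositive)
    (hnear : ∀ z, ‖z - y‖ ≤ δ → ∀ v, κ⁻¹ * ⟪H y v, v⟫_ℝ ≤ ⟪H z v, v⟫_ℝ)
    (hgδ : 2 / μ * ‖g y‖ ≤ δ) (hw : H y w = g y) (x : E) :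
    f y - κ / 2 * ⟪g y, w⟫_ℝ ≤ f x := by
  rcases le_total (f x) (f y) with hxy | hyx
  · have hxδ : ‖x - y‖ ≤ δ := (norm_sub_le_norm_gradient_of_le hμ hg hH hcoer hxy).trans hgδ
    have htaylor : f y + quadModel (κ⁻¹ • H y) (g y) (x - y) ≤ f x := by
      refine add_quadModel_le hg hH fun t ht => ?_
      rw [_root_.smul_apply, real_inner_smul_left]
      refine hnear _ ?_ _
      rw [add_sub_cancel_left, norm_smul, Real.norm_of_nonneg ht.1]
      exact (mul_le_of_le_one_left (norm_nonneg _) ht.2).trans hxδ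
    linarith [neg_inner_le_quadModel hpos hκ hw (x - y)]
  · have hnewton : 0 ≤ ⟪g y, w⟫_ℝ := hw ▸ hpos.inner_nonneg_left w
    have : 0 ≤ κ / 2 * ⟪g y, w⟫_ℝ := by positivity
    linarith

end Taylor

end QuadModel

section MMStep

variable {E : Type*} [NormedAddCommGroup E] [InnerProductSpace ℝ E]

/-- `x` is obtained from `y` by one step of the majorize-minimize subspace algorithm for `f`: the
surrogate `z ↦ f y + quadModel A g (z - y)`, in which `g` stands for the gradient of `f` at `y`,
majorizes `f`, and on a subspace `S` that contains `g` and `y` it is nowhere smaller than at `x`.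
Only the value at `x` matters, so `x ∈ S` is not part of the definition. -/
structure IsMMStep (f : E → ℝ) (A : E →L[ℝ] E) (g : E) (S : Submodule ℝ E) (y x : E) : Prop where
  gradient_mem : g ∈ S
  self_mem : y ∈ S
  majorizes (z : E) : f z ≤ f y + quadModel A g (z - y)
  isMinOn : IsMinOn (fun z => quadModel A g (z - y)) S x

namespace IsMMStep

variable {f : E → ℝ} {A : E →L[ℝ] E} {g x y : E} {S : Submodule ℝ E}

theorem le_add_quadModel (hstep : IsMMStep f A g S y x) {v : E} (hv : v ∈ S) :
    f x ≤ f y + quadModel A g v := by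
  have hmin := isMinOn_iff.1 hstep.isMinOn (y + v) (S.add_mem hstep.self_mem hv)
  rw [add_sub_cancel_left] at hmin
  linarith [hstep.majorizes x]

theorem le (hstep : IsMMStep f A g S y x) : f x ≤ f y := by
  simpa [quadModel_zero] using hstep.le_add_quadModel S.zero_mem

theorem le_sub_norm_gradient_sq (hstep : IsMMStep f A g S y x) {L : ℝ} (hL : 0 < L)
    (hA : ∀ v, ⟪A v, v⟫_ℝ ≤ L * ‖v‖ ^ 2) : f x ≤ f y - ‖g‖ ^ 2 / (2 * L) := by
  have := hstep.le_add_quadModel (S.neg_mem (S.smul_mem L⁻¹ hstep.gradient_mem))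
  linarith [quadModel_neg_inv_smul_le hL (hA g)]

-- The surrogate at `x` is compared with its value at `0 ∈ S`.
theorem norm_le (hstep : IsMMStep f A g S y x) (hA : (A : E →ₗ[ℝ] E).IsSymmetric) {μ : ℝ}
    (hμ : 0 < μ) (hcoer : ∀ v, μ * ‖v‖ ^ 2 ≤ ⟪A v, v⟫_ℝ) : ‖x‖ ≤ 2 / μ * ‖g - A y‖ := by
  have hmin := isMinOn_iff.1 hstep.isMinOn 0 S.zero_mem
  rw [zero_sub, sub_eq_add_neg, quadModel_add hA, map_neg, ← sub_eq_add_neg] at hmin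
  exact norm_le_of_quadModel_nonpos hμ hcoer (by linarith)

end IsMMStep

variable {A : ℕ → E →L[ℝ] E} {S : ℕ → Submodule ℝ E} {g h : ℕ → E}

theorem bddAbove_norm_of_isMMStep_const [CompleteSpace E] {f : E → ℝ} {G : E → E}
    {H : E → E →L[ℝ] E} {μ : ℝ} (hμ : 0 < μ) (hG : ∀ x, HasGradientAt f (G x) x)
    (hH : ∀ x, HasFDerivAt G (H x) x) (hcoer : ∀ x v, μ * ‖v‖ ^ 2 ≤ ⟪H x v, v⟫_ℝ)
    (hstep : ∀ n, IsMMStep f (A n) (g n) (S n) (h n) (h (n + 1))) :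
    BddAbove (Set.range fun n => ‖h n‖) := by
  have hdecr : Antitone fun n => f (h n) := antitone_nat_of_succ_le fun n => (hstep n).le
  refine ⟨‖h 0‖ + 2 / μ * ‖G (h 0)‖, Set.forall_mem_range.2 fun n => ?_⟩
  calc ‖h n‖ ≤ ‖h 0‖ + ‖h n - h 0‖ := norm_le_insert' _ _
    _ ≤ ‖h 0‖ + 2 / μ * ‖G (h 0)‖ := by
      gcongr
      exact norm_sub_le_norm_gradient_of_le hμ hG hH hcoer (hdecr n.zero_le)

theorem bddAbove_norm_of_isMMStep_of_residual {f : ℕ → E → ℝ} {μ : ℝ} (hμ : 0 < μ)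
    (hsymm : ∀ n, (A n : E →ₗ[ℝ] E).IsSymmetric)
    (hcoer : ∀ᶠ n in atTop, ∀ v, μ * ‖v‖ ^ 2 ≤ ⟪A n v, v⟫_ℝ)
    (hres : BddAbove (Set.range fun n => ‖g n - A n (h n)‖))
    (hstep : ∀ n, IsMMStep (f n) (A n) (g n) (S n) (h n) (h (n + 1))) :
    BddAbove (Set.range fun n => ‖h n‖) := by
  obtain ⟨c, hc⟩ := hres
  have hnext : ∀ᶠ n in atTop, ‖h (n + 1)‖ ≤ 2 / μ * c := by
    filter_upwards [hcoer] with n hn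
    refine ((hstep n).norm_le (hsymm n) hμ hn).trans ?_
    gcongr
    exact hc ⟨n, rfl⟩
  refine IsBoundedUnder.bddAbove_range ?_
  rw [← map_add_atTop_eq_nat 1, isBoundedUnder_map_iff]
  exact isBoundedUnder_of_eventually_le hnext

theorem tendsto_gradient_of_isMMStep {T : ℕ → E →L[ℝ] E} {r : ℕ → E} {Ψ : E → ℝ}
    {F : ℕ → E → ℝ} {L : ℝ} (hF : ∀ n x, F n x = quadModel (T n) (-r n) x + Ψ x)
    (hT : ∀ n v, 0 ≤ ⟪T n v, v⟫_ℝ) (hΨ : BddBelow (Set.range Ψ))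
    (hr : BddAbove (Set.range fun n => ‖r n‖))
    (hΔr : Summable fun n => ‖r n - r (n + 1)‖) (hΔT : Summable fun n => ‖T n - T (n + 1)‖)
    (hL : 0 < L) (hA : ∀ n v, ⟪A n v, v⟫_ℝ ≤ L * ‖v‖ ^ 2)
    (hbdd : BddAbove (Set.range fun n => ‖h n‖))
    (hstep : ∀ n, IsMMStep (F n) (A n) (g n) (S n) (h n) (h (n + 1))) :
    Tendsto g atTop (𝓝 0) := by
  obtain ⟨C, hC⟩ := hbdd
  have hhC (n : ℕ) : ‖h n‖ ≤ C := hC ⟨n, rfl⟩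
  have hbelow : BddBelow (Set.range fun n => F n (h n)) := by
    obtain ⟨m, hm⟩ := hΨ
    obtain ⟨ρ, hρ⟩ := hr
    refine ⟨-(ρ * C) + m, Set.forall_mem_range.2 fun n => ?_⟩
    have hlin : ⟪r n, h n⟫_ℝ ≤ ρ * C := (real_inner_le_norm _ _).trans
      (mul_le_mul (hρ ⟨n, rfl⟩) (hhC n) (norm_nonneg _) ((norm_nonneg _).trans (hρ ⟨n, rfl⟩)))
    rw [hF, quadModel, inner_neg_left]
    linarith [hT n (h n), hm ⟨h n, rfl⟩]
  have hdrift (n : ℕ) : F (n + 1) (h (n + 1)) ≤ F n (h (n + 1)) +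
      (‖r n - r (n + 1)‖ * C + 1 / 2 * (‖T n - T (n + 1)‖ * C ^ 2)) := by
    have hdiff := quadModel_sub_sub (T (n + 1)) (T n) (-r (n + 1)) (-r n) (h (n + 1))
    have hle := quadModel_le (T (n + 1) - T n) (-r (n + 1) - -r n) (h (n + 1))
    rw [neg_sub_neg, norm_sub_rev (T (n + 1))] at hle
    have : ‖r n - r (n + 1)‖ * ‖h (n + 1)‖ + 1 / 2 * (‖T n - T (n + 1)‖ * ‖h (n + 1)‖ ^ 2) ≤
        ‖r n - r (n + 1)‖ * C + 1 / 2 * (‖T n - T (n + 1)‖ * C ^ 2) := by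
      gcongr <;> exact hhC _
    rw [hF, hF]
    rw [neg_sub_neg] at hdiff
    linarith
  have hsummable : Summable fun n => ‖g n‖ ^ 2 / (2 * L) :=
    summable_of_le_sub_add hbelow (fun n => by positivity)
      ((hΔr.mul_right C).add ((hΔT.mul_right (C ^ 2)).mul_left (1 / 2)))
      fun n => (hdrift n).trans (by gcongr; exact (hstep n).le_sub_norm_gradient_sq hL (hA n))
  have hsq : Tendsto (fun n => ‖g n‖ ^ 2) atTop (𝓝 0) :=
    ((summable_div_const_iff (by positivity)).1 hsummable).tendsto_atTop_zero
  exact tendsto_zero_iff_norm_tendsto_zero.2 (by simpa using hsq.sqrt)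

end MMStep

section LowerBound

theorem exists_forall_norm_sub_le_of_continuous {E E' : Type*} [NormedAddCommGroup E]
    [ProperSpace E] [NormedAddCommGroup E'] {H : E → E'} (hH : Continuous H) (C : ℝ) {η : ℝ}
    (hη : 0 < η) : ∃ δ > 0, ∀ y z, ‖y‖ ≤ C → ‖z - y‖ ≤ δ → ‖H y - H z‖ ≤ η := by
  have hunif := (isCompact_closedBall (0 : E) C).uniformContinuousAt_of_continuousAt H
    (fun y _ => hH.continuousAt) (Metric.dist_mem_uniformity hη)
  obtain ⟨δ, hδ, hsub⟩ := Metric.mem_uniformity_dist.1 hunif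
  refine ⟨δ / 2, half_pos hδ, fun y z hy hz => ?_⟩
  have hyz : dist y z < δ := by
    rw [dist_comm, dist_eq_norm]
    linarith
  have hHyz : dist (H y) (H z) < η := hsub hyz (by simpa using hy)
  exact dist_eq_norm (H y) (H z) ▸ hHyz.le

variable {E : Type*} [NormedAddCommGroup E] [InnerProductSpace ℝ E] [FiniteDimensional ℝ E]

theorem eventually_sub_inner_le {F : ℕ → E → ℝ} {G : ℕ → E → E} {T : ℕ → E →L[ℝ] E}
    {H : E → E →L[ℝ] E} {h : ℕ → E} {μ ε : ℝ} (hμ : 0 < μ) (hε : 0 < ε)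
    (hG : ∀ n x, HasGradientAt (F n) (G n x) x) (hGH : ∀ n x, HasFDerivAt (G n) (T n + H x) x)
    (hT : ∀ n, (T n).IsPositive) (hcoer : ∀ᶠ n in atTop, ∀ v, μ * ‖v‖ ^ 2 ≤ ⟪T n v, v⟫_ℝ)
    (hH : ∀ x, (H x).IsPositive) (hcont : Continuous H)
    (hbdd : BddAbove (Set.range fun n => ‖h n‖))
    (hlim : Tendsto (fun n => G n (h n)) atTop (𝓝 0)) :
    ∀ᶠ n in atTop, ∀ w, (T n + H (h n)) w = G n (h n) →
      ∀ x, F n (h n) - (1 + ε) / 2 * ⟪G n (h n), w⟫_ℝ ≤ F n x := by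
  obtain ⟨C, hC⟩ := hbdd
  obtain ⟨δ, hδ, hHδ⟩ := exists_forall_norm_sub_le_of_continuous hcont C (mul_pos hε hμ)
  have hsmall : ∀ᶠ n in atTop, 2 / μ * ‖G n (h n)‖ ≤ δ :=
    (hlim.norm.const_mul (2 / μ)).eventually_le_const (by simpa using hδ)
  filter_upwards [hcoer, hsmall] with n hTn hGn w hw
  have hnonneg (x v : E) : 0 ≤ ⟪H x v, v⟫_ℝ := (hH x).inner_nonneg_left v
  refine sub_inner_le_of_hessian_near hμ (by positivity) (hG n) (hGH n)
    (fun x v => ?_) ((hT n).add (hH _)) (fun z hz v => ?_) hGn hw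
  · rw [_root_.add_apply, inner_add_left]
    linarith [hTn v, hnonneg x v]
  · have hdiff : ⟪H (h n) v, v⟫_ℝ - ⟪H z v, v⟫_ℝ ≤ ε * ⟪T n v, v⟫_ℝ :=
      calc ⟪H (h n) v, v⟫_ℝ - ⟪H z v, v⟫_ℝ = ⟪(H (h n) - H z) v, v⟫_ℝ := by
            rw [_root_.sub_apply, inner_sub_left]
        _ ≤ ‖H (h n) - H z‖ * ‖v‖ ^ 2 := inner_apply_self_le _ v
        _ ≤ ε * μ * ‖v‖ ^ 2 := by gcongr; exact hHδ _ _ (hC ⟨n, rfl⟩) hz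
        _ = ε * (μ * ‖v‖ ^ 2) := mul_assoc _ _ _
        _ ≤ ε * ⟪T n v, v⟫_ℝ := by gcongr; exact hTn v
    rw [_root_.add_apply, _root_.add_apply, inner_add_left, inner_add_left,
      inv_mul_le_iff₀ (by positivity)]
    linarith [mul_nonneg hε.le (hnonneg z v)]

end LowerBound

section RegularizedLeastSquares

variable {E : Type*} [NormedAddCommGroup E] [InnerProductSpace ℝ E]

theorem hasGradientAt_quadModel_add [CompleteSpace E] {A : E →L[ℝ] E}
    (hA : (A : E →ₗ[ℝ] E).IsSymmetric) {f : E → ℝ} {g x : E} (hf : HasGradientAt f g x) (p : E) :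
    HasGradientAt (fun x => quadModel A p x + f x) (p + A x + g) x := by
  rw [hasGradientAt_iff_hasFDerivAt] at hf ⊢
  have hlin := (hasFDerivAt_const p x).inner ℝ (hasFDerivAt_id x)
  have hquad := ((A.hasFDerivAt (x := x)).inner ℝ (hasFDerivAt_id x)).const_mul (1 / 2 : ℝ)
  refine ((hlin.add hquad).add hf).congr_fderiv ?_
  ext v
  have hswap : ⟪A v, x⟫_ℝ = ⟪A x, v⟫_ℝ := (hA v x).trans (real_inner_comm _ _)
  simp [hswap]
  ring

theorem eventually_inner_sub_le_of_tendsto {T : ℕ → E →L[ℝ] E} {T₀ : E →L[ℝ] E}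
    (hT : Tendsto T atTop (𝓝 T₀)) {η : ℝ} (hη : 0 < η) :
    ∀ᶠ n in atTop, ∀ v, ⟪T₀ v, v⟫_ℝ - η * ‖v‖ ^ 2 ≤ ⟪T n v, v⟫_ℝ := by
  have hnorm : ∀ᶠ n in atTop, ‖T n - T₀‖ ≤ η :=
    (tendsto_iff_norm_sub_tendsto_zero.1 hT).eventually_le_const hη
  filter_upwards [hnorm] with n hn v
  have : ⟪T₀ v, v⟫_ℝ - ⟪T n v, v⟫_ℝ ≤ η * ‖v‖ ^ 2 :=
    calc ⟪T₀ v, v⟫_ℝ - ⟪T n v, v⟫_ℝ = ⟪(T₀ - T n) v, v⟫_ℝ := by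
          rw [_root_.sub_apply, inner_sub_left]
      _ ≤ ‖T₀ - T n‖ * ‖v‖ ^ 2 := inner_apply_self_le _ v
      _ ≤ η * ‖v‖ ^ 2 := by rw [norm_sub_rev]; gcongr
  linarith

theorem inner_add_apply_self_le {A B : E →L[ℝ] E} {a b : ℝ} (hA : ‖A‖ ≤ a) {v : E}
    (hB : ⟪B v, v⟫_ℝ ≤ b * ‖v‖ ^ 2) : ⟪(A + B) v, v⟫_ℝ ≤ (a + b) * ‖v‖ ^ 2 := by
  rw [_root_.add_apply, inner_add_left, add_mul]
  gcongr
  exact (inner_apply_self_le A v).trans (by gcongr)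

theorem eventually_sub_inner_le_of_isMMStep [FiniteDimensional ℝ E] {F : ℕ → E → ℝ}
    {G : ℕ → E → E} {T : ℕ → E →L[ℝ] E} {T₀ : E →L[ℝ] E} {r : ℕ → E} {r₀ : E} {Ψ : E → ℝ}
    {gΨ : E → E} {H B : E → E →L[ℝ] E} {S : ℕ → Submodule ℝ E} {h : ℕ → E} {μ b ε : ℝ}
    (hF : ∀ n x, F n x = quadModel (T n) (-r n) x + Ψ x)
    (hG : ∀ n x, HasGradientAt (F n) (G n x) x)
    (hΨ : BddBelow (Set.range Ψ)) (hgΨ : ∀ x, HasGradientAt Ψ (gΨ x) x)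
    (hHΨ : ∀ x, HasFDerivAt gΨ (H x) x) (hH : ∀ x, (H x).IsPositive) (hcont : Continuous H)
    (hT : ∀ n, (T n).IsPositive) (hTlim : Tendsto T atTop (𝓝 T₀)) (hrlim : Tendsto r atTop (𝓝 r₀))
    (hΔT : Summable fun n => ‖T n - T (n + 1)‖) (hΔr : Summable fun n => ‖r n - r (n + 1)‖)
    (hμ : 0 < μ) (hT₀ : ∀ v, μ * ‖v‖ ^ 2 ≤ ⟪T₀ v, v⟫_ℝ)
    (hB : ∀ x, (B x).IsPositive) (hBb : ∀ x v, ⟪B x v, v⟫_ℝ ≤ b * ‖v‖ ^ 2)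
    (hstep : ∀ n, IsMMStep (F n) (T n + B (h n)) (G n (h n)) (S n) (h n) (h (n + 1)))
    (hcases : (∀ n, r n = r₀ ∧ T n = T₀) ∨ ∃ c, ∀ x, ‖B x x - gΨ x‖ ≤ c) (hε : 0 < ε) :
    ∀ᶠ n in atTop, ∀ w, (T n + H (h n)) w = G n (h n) →
      ∀ x, F n (h n) - (1 + ε) / 2 * ⟪G n (h n), w⟫_ℝ ≤ F n x := by
  obtain ⟨ρ, hρ⟩ := hrlim.norm.bddAbove_range
  obtain ⟨τ, hτ⟩ := hTlim.norm.bddAbove_range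
  have hgrad (n : ℕ) (x : E) : G n x = -r n + T n x + gΨ x :=
    (hG n x).unique (funext (hF n) ▸ hasGradientAt_quadModel_add (hT n).isSymmetric (hgΨ x) _)
  have hhess (n : ℕ) (x : E) : HasFDerivAt (G n) (T n + H x) x :=
    funext (hgrad n) ▸ ((T n).hasFDerivAt.const_add _).add (hHΨ x)
  have hcoer : ∀ᶠ n in atTop, ∀ v, μ / 2 * ‖v‖ ^ 2 ≤ ⟪T n v, v⟫_ℝ := by
    filter_upwards [eventually_inner_sub_le_of_tendsto hTlim (half_pos hμ)] with n hn v
    linarith [hn v, hT₀ v]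
  have hbdd : BddAbove (Set.range fun n => ‖h n‖) := by
    rcases hcases with hconst | ⟨c, hc⟩
    · have hF₀ (n : ℕ) : F n = F 0 := funext fun x => by
        rw [hF, hF, (hconst n).1, (hconst n).2, (hconst 0).1, (hconst 0).2]
      refine bddAbove_norm_of_isMMStep_const hμ (hG 0) (hhess 0) (fun x v => ?_)
        fun n => hF₀ n ▸ hstep n
      rw [_root_.add_apply, inner_add_left, (hconst 0).2]
      linarith [hT₀ v, (hH x).inner_nonneg_left v]
    · refine bddAbove_norm_of_isMMStep_of_residual (half_pos hμ)
        (fun n => ((hT n).add (hB _)).isSymmetric) ?_ ⟨ρ + c, Set.forall_mem_range.2 fun n => ?_⟩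
        hstep
      · filter_upwards [hcoer] with n hn v
        rw [_root_.add_apply, inner_add_left]
        linarith [hn v, (hB (h n)).inner_nonneg_left v]
      · have hres : G n (h n) - (T n + B (h n)) (h n) = -(r n + (B (h n) (h n) - gΨ (h n))) := by
          rw [hgrad, _root_.add_apply]
          abel
        rw [hres, norm_neg]
        exact (norm_add_le _ _).trans (add_le_add (hρ ⟨n, rfl⟩) (hc _))
  have hlim : Tendsto (fun n => G n (h n)) atTop (𝓝 0) := by
    refine tendsto_gradient_of_isMMStep (L := max 1 (τ + b)) hF
      (fun n => (hT n).inner_nonneg_left) hΨ ⟨ρ, hρ⟩ hΔr hΔT (by positivity) (fun n v => ?_)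
      hbdd hstep
    exact (inner_add_apply_self_le (hτ ⟨n, rfl⟩) (hBb _ v)).trans
      (by gcongr; exact le_max_right _ _)
  exact eventually_sub_inner_le (half_pos hμ) hε hG hhess hT hcoer hH hcont hbdd hlim

end RegularizedLeastSquares

section MatrixOperators

local notation "opE" => toEuclideanCLM (𝕜 := ℝ)

section

variable {ι : Type*} [Fintype ι] [DecidableEq ι] {M : Matrix ι ι ℝ}

theorem isPositive_toEuclideanCLM_iff : (opE M).IsPositive ↔ M.PosSemidef :=
  (LinearMap.isPositive_toContinuousLinearMap_iff _).trans isPositive_toEuclideanLin_iff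

theorem posSemidef_of_inner_toEuclideanCLM_nonneg (hM : M.IsHermitian)
    (hnonneg : ∀ v, 0 ≤ ⟪opE M v, v⟫_ℝ) : M.PosSemidef :=
  isPositive_toEuclideanCLM_iff.1 <|
    (ContinuousLinearMap.isPositive_iff _).2 ⟨isSymmetric_toEuclideanLin_iff.2 hM, hnonneg⟩

theorem posSemidef_of_hasFDerivAt_gradient {f : EuclideanSpace ℝ ι → ℝ}
    {g : EuclideanSpace ℝ ι → EuclideanSpace ℝ ι} {H : EuclideanSpace ℝ ι → Matrix ι ι ℝ}
    (hf : ConvexOn ℝ Set.univ f) (hg : ∀ x, HasGradientAt f (g x) x)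
    (hH : ∀ x, HasFDerivAt g (opE (H x)) x) {x : EuclideanSpace ℝ ι} (hsymm : (H x).IsHermitian) :
    (H x).PosSemidef :=
  posSemidef_of_inner_toEuclideanCLM_nonneg hsymm (inner_hessian_nonneg_of_convexOn hg hH hf x)

theorem inner_toEuclideanCLM_sub_smul_one (c : ℝ) (v : EuclideanSpace ℝ ι) :
    ⟪opE (M - c • 1) v, v⟫_ℝ = ⟪opE M v, v⟫_ℝ - c * ‖v‖ ^ 2 := by
  simp [inner_sub_left, real_inner_smul_left]

theorem mul_norm_sq_le_of_posSemidef_sub_smul_one {c : ℝ} (hM : (M - c • 1).PosSemidef)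
    (v : EuclideanSpace ℝ ι) : c * ‖v‖ ^ 2 ≤ ⟪opE M v, v⟫_ℝ := by
  have := (isPositive_toEuclideanCLM_iff.2 hM).inner_nonneg_left v
  rwa [inner_toEuclideanCLM_sub_smul_one, sub_nonneg] at this

theorem inner_toEuclideanCLM_le_of_posSemidef_sub_s3 {M' : Matrix ι ι ℝ} (h : (M' - M).PosSemidef)
    (v : EuclideanSpace ℝ ι) : ⟪opE M v, v⟫_ℝ ≤ ⟪opE M' v, v⟫_ℝ := by
  have := (isPositive_toEuclideanCLM_iff.2 h).inner_nonneg_left v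
  rw [map_sub, _root_.sub_apply, inner_sub_left] at this
  linarith

theorem tendsto_toEuclideanCLM_s3 {Mn : ℕ → Matrix ι ι ℝ}
    (hM : ∀ i j, Tendsto (fun n => Mn n i j) atTop (𝓝 (M i j))) :
    Tendsto (fun n => opE (Mn n)) atTop (𝓝 (opE M)) :=
  ((LinearMap.continuous_of_finiteDimensional
    (opE : _ ≃⋆ₐ[ℝ] (EuclideanSpace ℝ ι →L[ℝ] _)).toAlgEquiv.toLinearMap).tendsto M).comp
      (tendsto_pi_nhds.2 fun i => tendsto_pi_nhds.2 (hM i))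

theorem summable_norm_toEuclideanCLM_sub {Mn Mn' : ℕ → Matrix ι ι ℝ}
    (hM : ∀ i j, Summable fun n => |Mn n i j - Mn' n i j|) :
    Summable fun n => ‖opE (Mn n) - opE (Mn' n)‖ := by
  have hsub : Summable fun n => Mn n - Mn' n :=
    Pi.summable.2 fun i => Pi.summable.2 fun j => summable_abs_iff.1 (hM i j)
  have := hsub.map _ (LinearMap.continuous_of_finiteDimensional
    (opE : _ ≃⋆ₐ[ℝ] (EuclideanSpace ℝ ι →L[ℝ] _)).toAlgEquiv.toLinearMap)
  exact summable_norm_iff.2 (this.congr fun n => map_sub opE (Mn n) (Mn' n))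

end

theorem eventually_posSemidef_sub_sub_smul_one {ι : Type*} [Finite ι] [DecidableEq ι]
    {M : Matrix ι ι ℝ} {Mn : ℕ → Matrix ι ι ℝ} (hMn : ∀ n, (Mn n).IsHermitian) (hM : M.IsHermitian)
    (hlim : ∀ i j, Tendsto (fun n => Mn n i j) atTop (𝓝 (M i j))) {c : ℝ} (hc : 0 < c) :
    ∀ᶠ n in atTop, (Mn n - (M - c • 1)).PosSemidef := by
  cases nonempty_fintype ι
  filter_upwards [eventually_inner_sub_le_of_tendsto (tendsto_toEuclideanCLM_s3 hlim) hc] with n hn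
  refine posSemidef_of_inner_toEuclideanCLM_nonneg
    ((hMn n).sub (hM.sub (isHermitian_one.smul (.all c)))) fun v => ?_
  rw [map_sub, _root_.sub_apply, inner_sub_left, inner_toEuclideanCLM_sub_smul_one]
  linarith [hn v]

theorem dotProduct_add_half_qf {N : ℕ} (A : Matrix (Fin N) (Fin N) ℝ)
    (g v : EuclideanSpace ℝ (Fin N)) :
    ofEuc g ⬝ᵥ ofEuc v + 1 / 2 * qf A v = quadModel (opE A) g v := by
  rw [quadModel, real_inner_comm, real_inner_comm v, inner_toEuclideanCLM,
    EuclideanSpace.inner_eq_star_dotProduct]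
  rfl

theorem half_qf_sub_dotProduct {N : ℕ} (A : Matrix (Fin N) (Fin N) ℝ)
    (r x : EuclideanSpace ℝ (Fin N)) :
    1 / 2 * qf A x - ofEuc r ⬝ᵥ ofEuc x = quadModel (opE A) (-r) x := by
  rw [← dotProduct_add_half_qf, sub_eq_neg_add, ← neg_dotProduct]
  rfl

theorem coe_range_toEuclideanLin {N m : ℕ} (D : Matrix (Fin N) (Fin m) ℝ) :
    (LinearMap.range (toEuclideanLin D) : Set (EuclideanSpace ℝ (Fin N))) = rangeD D := by
  ext x
  exact ⟨fun ⟨u, hu⟩ => ⟨u.ofLp, hu.symm⟩, fun ⟨u, hu⟩ => ⟨WithLp.toLp 2 u, hu.symm⟩⟩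

theorem isMMStep_of_rangeD {N m : ℕ} {f : EuclideanSpace ℝ (Fin N) → ℝ}
    {A : Matrix (Fin N) (Fin N) ℝ} {D : Matrix (Fin N) (Fin m) ℝ}
    {g x y : EuclideanSpace ℝ (Fin N)} {Θ : EuclideanSpace ℝ (Fin N) → ℝ}
    (hΘ : ∀ z, Θ z = f y + ofEuc g ⬝ᵥ ofEuc (z - y) + 1 / 2 * qf A (z - y))
    (hg : g ∈ rangeD D) (hy : y ∈ rangeD D) (hmaj : ∀ z, f z ≤ Θ z)
    (hmin : ∀ z ∈ rangeD D, Θ x ≤ Θ z) :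
    IsMMStep f (opE A) g (LinearMap.range (toEuclideanLin D)) y x := by
  have hquad (z : EuclideanSpace ℝ (Fin N)) : Θ z = f y + quadModel (opE A) g (z - y) := by
    rw [hΘ, add_assoc, dotProduct_add_half_qf]
  simp only [← coe_range_toEuclideanLin, SetLike.mem_coe] at hg hy hmin
  refine ⟨hg, hy, fun z => hquad z ▸ hmaj z, isMinOn_iff.2 fun z hz => ?_⟩
  have := hmin z hz
  rw [hquad, hquad] at this
  exact le_of_add_le_add_left this

theorem transpose_pinv_mul_mul_pinv {m : ℕ} {G : Matrix (Fin m) (Fin m) ℝ} (hG : Gᵀ = G) :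
    (pinv G)ᵀ * G * pinv G = pinv G := by
  unfold pinv
  split_ifs with hex
  · obtain ⟨hGPG, hPGP, hGP, hPG⟩ := hex.choose_spec
    set P := hex.choose
    rw [transpose_mul, hG] at hGP hPG
    have hGP' : G * P = G * P * (P * G) :=
      calc G * P = Pᵀ * (G * P * G) := by rw [hGPG, hGP]
        _ = Pᵀ * G * (P * G) := by simp only [Matrix.mul_assoc]
        _ = G * P * (P * G) := by rw [hGP]
    have hPG' : P * G = G * P * (P * G) :=
      calc P * G = G * P * G * Pᵀ := by rw [hGPG, hPG]
        _ = G * P * (G * Pᵀ) := by simp only [Matrix.mul_assoc]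
        _ = G * P * (P * G) := by rw [hPG]
    rw [hGP, hGP', ← hPG', hPGP]
  · simp only [transpose_zero, Matrix.zero_mul]

/-- The paper's matrix `C_n(h) = D (Dᵀ A D)† Dᵀ`. For positive semidefinite `A`, it sends `g` to the
opposite of a minimizer of `quadModel A g` over the range of `D`, if there is one. -/
noncomputable def compressedPinv {N m : ℕ} (A : Matrix (Fin N) (Fin N) ℝ)
    (D : Matrix (Fin N) (Fin m) ℝ) : Matrix (Fin N) (Fin N) ℝ :=
  D * pinv (Dᵀ * A * D) * Dᵀ

section CompressedPinv

variable {N m : ℕ} {A : Matrix (Fin N) (Fin N) ℝ}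

theorem transpose_compressedPinv_mul_mul (hA : A.IsHermitian) (D : Matrix (Fin N) (Fin m) ℝ) :
    (compressedPinv A D)ᵀ * A * compressedPinv A D = compressedPinv A D := by
  have hA' : Aᵀ = A := conjTranspose_eq_transpose_of_trivial A ▸ hA
  have hG : (Dᵀ * A * D)ᵀ = Dᵀ * A * D := by
    simp only [transpose_mul, transpose_transpose, hA', Matrix.mul_assoc]
  calc (compressedPinv A D)ᵀ * A * compressedPinv A D
      = D * ((pinv (Dᵀ * A * D))ᵀ * (Dᵀ * A * D) * pinv (Dᵀ * A * D)) * Dᵀ := by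
        simp only [compressedPinv, transpose_mul, transpose_transpose, Matrix.mul_assoc]
    _ = compressedPinv A D := by rw [transpose_pinv_mul_mul_pinv hG, compressedPinv]

theorem posSemidef_compressedPinv (hA : A.PosSemidef) (D : Matrix (Fin N) (Fin m) ℝ) :
    (compressedPinv A D).PosSemidef := by
  have := hA.conjTranspose_mul_mul_same (compressedPinv A D)
  rwa [conjTranspose_eq_transpose_of_trivial, transpose_compressedPinv_mul_mul hA.isHermitian]
    at this

theorem quadModel_neg_compressedPinv (hA : A.IsHermitian) (D : Matrix (Fin N) (Fin m) ℝ)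
    (g : EuclideanSpace ℝ (Fin N)) :
    quadModel (opE A) g (-opE (compressedPinv A D) g) =
      -(1 / 2 * (ofEuc g ⬝ᵥ compressedPinv A D *ᵥ ofEuc g)) := by
  have hCAC : ⟪opE A (opE (compressedPinv A D) g), opE (compressedPinv A D) g⟫_ℝ =
      ⟪g, opE (compressedPinv A D) g⟫_ℝ := by
    conv_rhs => rw [← transpose_compressedPinv_mul_mul hA D]
    rw [real_inner_comm, inner_toEuclideanCLM, inner_toEuclideanCLM, ← mulVec_mulVec,
      ← mulVec_mulVec, dotProduct_mulVec _ (compressedPinv A D)ᵀ, vecMul_transpose]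
    rfl
  have hdot : ⟪g, opE (compressedPinv A D) g⟫_ℝ = ofEuc g ⬝ᵥ compressedPinv A D *ᵥ ofEuc g :=
    inner_toEuclideanCLM _ _ _
  simp only [quadModel, map_neg, inner_neg_left, inner_neg_right, neg_neg, hCAC, hdot]
  ring

theorem IsMMStep.le_sub_compressedPinv {D : Matrix (Fin N) (Fin m) ℝ}
    {f : EuclideanSpace ℝ (Fin N) → ℝ} {g x y : EuclideanSpace ℝ (Fin N)} (hA : A.IsHermitian)
    (hstep : IsMMStep f (opE A) g (LinearMap.range (toEuclideanLin D)) y x) :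
    f x ≤ f y - 1 / 2 * (ofEuc g ⬝ᵥ compressedPinv A D *ᵥ ofEuc g) := by
  have hrange : opE (compressedPinv A D) g ∈ LinearMap.range (toEuclideanLin D) := by
    refine ⟨WithLp.toLp 2 (pinv (Dᵀ * A * D) *ᵥ Dᵀ *ᵥ ofEuc g), congrArg (WithLp.toLp 2) ?_⟩
    change D *ᵥ pinv (Dᵀ * A * D) *ᵥ Dᵀ *ᵥ ofEuc g = compressedPinv A D *ᵥ ofEuc g
    simp only [compressedPinv, mulVec_mulVec, Matrix.mul_assoc]
  have := hstep.le_add_quadModel (Submodule.neg_mem _ hrange)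
  rwa [quadModel_neg_compressedPinv hA, ← sub_eq_add_neg] at this

end CompressedPinv

theorem sub_le_one_sub_mul_sub {a a' i c q κ : ℝ} (hc : 0 ≤ c) (hq : 0 < q) (hκ : 0 < κ)
    (hdecr : a' ≤ a - 1 / 2 * c) (hlow : a - κ / 2 * q ≤ i) :
    a' - i ≤ (1 - κ⁻¹ * (c / q)) * (a - i) := by
  have hgap : κ⁻¹ * (c / q) * (a - i) ≤ 1 / 2 * c :=
    calc κ⁻¹ * (c / q) * (a - i) ≤ κ⁻¹ * (c / q) * (κ / 2 * q) := by gcongr; linarith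
      _ = 1 / 2 * c := by field_simp
  linarith

section Rate

variable {N m : ℕ} {A K : Matrix (Fin N) (Fin N) ℝ} {D : Matrix (Fin N) (Fin m) ℝ}
  {f : EuclideanSpace ℝ (Fin N) → ℝ} {g x y : EuclideanSpace ℝ (Fin N)} {κ : ℝ}

theorem IsMMStep.sub_iInf_le (hA : A.PosSemidef) (hK : K.PosDef) (hg : g ≠ 0) (hκ : 0 < κ)
    (hstep : IsMMStep f (opE A) g (LinearMap.range (toEuclideanLin D)) y x)
    (hlow : ∀ w, opE K w = g → ∀ z, f y - κ / 2 * ⟪g, w⟫_ℝ ≤ f z) :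
    f x - ⨅ z, f z ≤ (1 - κ⁻¹ * ((ofEuc g ⬝ᵥ compressedPinv A D *ᵥ ofEuc g) /
      (ofEuc g ⬝ᵥ K⁻¹ *ᵥ ofEuc g))) * (f y - ⨅ z, f z) := by
  have hcompressed : 0 ≤ ofEuc g ⬝ᵥ compressedPinv A D *ᵥ ofEuc g :=
    (posSemidef_compressedPinv hA D).dotProduct_mulVec_nonneg (ofEuc g)
  have hnewton : 0 < ofEuc g ⬝ᵥ K⁻¹ *ᵥ ofEuc g :=
    hK.inv.dotProduct_mulVec_pos fun h => hg ((WithLp.equiv 2 _).injective h)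
  have hsolve : opE K (opE K⁻¹ g) = g := by
    rw [← _root_.mul_apply_eq_comp, ← map_mul,
      mul_nonsing_inv _ ((isUnit_iff_isUnit_det K).1 hK.isUnit), map_one]
    rfl
  have hinf : f y - κ / 2 * (ofEuc g ⬝ᵥ K⁻¹ *ᵥ ofEuc g) ≤ ⨅ z, f z :=
    le_ciInf fun z => (inner_toEuclideanCLM K⁻¹ g g) ▸ hlow _ hsolve z
  exact sub_le_one_sub_mul_sub hcompressed hnewton hκ (hstep.le_sub_compressedPinv hA.isHermitian)
    hinf

end Rate

end MatrixOperators

theorem mm_convergence_rate_theta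
    {N : ℕ} (hN : 0 < N)
    (R : Matrix (Fin N) (Fin N) ℝ) (hRpd : R.PosDef)
    (r : EuclideanSpace ℝ (Fin N))
    (Ψ : EuclideanSpace ℝ (Fin N) → ℝ)
    (hΨbdd : BddBelow (Set.range Ψ))
    (hΨconv : ConvexOn ℝ Set.univ Ψ)
    (hΨC2 : ContDiff ℝ 2 Ψ)
    (gradΨ : EuclideanSpace ℝ (Fin N) → EuclideanSpace ℝ (Fin N))
    (hgradΨ : ∀ x, HasGradientAt Ψ (gradΨ x) x)
    (hessΨ : EuclideanSpace ℝ (Fin N) → Matrix (Fin N) (Fin N) ℝ)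
    (hhessΨ : ∀ x, HasFDerivAt gradΨ
      (LinearMap.toContinuousLinearMap (Matrix.toEuclideanLin (hessΨ x))) x)
    (F : EuclideanSpace ℝ (Fin N) → ℝ)
    (hF : ∀ x, F x = (1/2) * qf R x - ofEuc r ⬝ᵥ ofEuc x + Ψ x)
    (Rn : ℕ → Matrix (Fin N) (Fin N) ℝ) (hRnpsd : ∀ n, (Rn n).PosSemidef)
    (rn : ℕ → EuclideanSpace ℝ (Fin N))
    (Fn : ℕ → EuclideanSpace ℝ (Fin N) → ℝ)
    (hFn : ∀ n x, Fn n x = (1/2) * qf (Rn n) x - ofEuc (rn n) ⬝ᵥ ofEuc x + Ψ x)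
    (B : EuclideanSpace ℝ (Fin N) → Matrix (Fin N) (Fin N) ℝ)
    (hBpsd : ∀ x, (B x).PosSemidef)
    (An : ℕ → EuclideanSpace ℝ (Fin N) → Matrix (Fin N) (Fin N) ℝ)
    (hAn : ∀ n x, An n x = Rn n + B x)
    (gradFn : ℕ → EuclideanSpace ℝ (Fin N) → EuclideanSpace ℝ (Fin N))
    (hgradFn : ∀ n x, HasGradientAt (Fn n) (gradFn n x) x)
    (Θ : ℕ → EuclideanSpace ℝ (Fin N) → EuclideanSpace ℝ (Fin N) → ℝ)
    (hΘ : ∀ n x y, Θ n x y =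
      Fn n y + ofEuc (gradFn n y) ⬝ᵥ ofEuc (x - y) + (1/2) * qf (An n y) (x - y))
    (M : ℕ → ℕ) (D : (n : ℕ) → Matrix (Fin N) (Fin (M n)) ℝ)
    (h : ℕ → EuclideanSpace ℝ (Fin N))
    (halg : ∀ n, h (n+1) ∈ rangeD (D n) ∧
      ∀ y ∈ rangeD (D n), Θ n (h (n+1)) (h n) ≤ Θ n y (h n))
    (hmaj : ∀ n x, Fn n x ≤ Θ n x (h n))
    (ha1r : Summable (fun n => ‖rn n - rn (n+1)‖))
    (ha1R : ∀ i j, Summable (fun n => |Rn n i j - Rn (n+1) i j|))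
    (ha1rlim : Tendsto rn atTop (𝓝 r))
    (ha1Rlim : ∀ i j, Tendsto (fun n => Rn n i j) atTop (𝓝 (R i j)))
    (ha2i : ∀ n, gradFn n (h n) ∈ rangeD (D n) ∧ h n ∈ rangeD (D n))
    (V : Matrix (Fin N) (Fin N) ℝ) (hVpd : V.PosDef)
    (ha2ii : ∀ x, (B x - hessΨ x).PosSemidef ∧ (V - B x).PosSemidef)
    (ha2iii : (∀ n, rn n = r ∧ Rn n = R) ∨
      (∃ c : ℝ, ∀ x, ‖mulE (B x) x - gradΨ x‖ ≤ c))
    (ε : ℝ) (hε : 0 < ε)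
    (hεR : (R - ε • (1 : Matrix (Fin N) (Fin N) ℝ)).PosDef)
    :
    ∃ nε : ℕ, 1 ≤ nε ∧ ∀ n ≥ nε, gradFn n (h n) ≠ 0 →
      ((Rn n + hessΨ (h n)) - (R - ε • (1 : Matrix (Fin N) (Fin N) ℝ))).PosSemidef ∧
      Fn n (h (n+1)) - (⨅ x, Fn n x) ≤
        (1 - (1 + ε)⁻¹ *
            ((ofEuc (gradFn n (h n)) ⬝ᵥ
                (D n * pinv ((D n)ᵀ * An n (h n) * D n) * (D n)ᵀ).mulVec
                  (ofEuc (gradFn n (h n)))) /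
              (ofEuc (gradFn n (h n)) ⬝ᵥ
                (Rn n + hessΨ (h n))⁻¹.mulVec (ofEuc (gradFn n (h n)))))) *
          (Fn n (h n) - (⨅ x, Fn n x)) := by
  have hhess (x : EuclideanSpace ℝ (Fin N)) : (hessΨ x).PosSemidef :=
    posSemidef_of_hasFDerivAt_gradient hΨconv hgradΨ hhessΨ <|
      sub_sub_cancel (B x) (hessΨ x) ▸ (hBpsd x).isHermitian.sub (ha2ii x).1.isHermitian
  have hA (n : ℕ) : (An n (h n)).PosSemidef := hAn n (h n) ▸ (hRnpsd n).add (hBpsd _)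
  have hstep (n : ℕ) := isMMStep_of_rangeD (hΘ n · (h n)) (ha2i n).1 (ha2i n).2 (hmaj n) (halg n).2
  have hlow := eventually_sub_inner_le_of_isMMStep
    (fun n x => by rw [hFn, half_qf_sub_dotProduct]) hgradFn hΨbdd hgradΨ hhessΨ
    (fun x => isPositive_toEuclideanCLM_iff.2 (hhess x))
    (continuous_hessian_of_contDiff_two hΨC2 hgradΨ hhessΨ)
    (fun n => isPositive_toEuclideanCLM_iff.2 (hRnpsd n)) (tendsto_toEuclideanCLM_s3 ha1Rlim) ha1rlim
    (summable_norm_toEuclideanCLM_sub ha1R) ha1r hε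
    (mul_norm_sq_le_of_posSemidef_sub_smul_one hεR.posSemidef)
    (fun x => isPositive_toEuclideanCLM_iff.2 (hBpsd x))
    (fun x v => (inner_toEuclideanCLM_le_of_posSemidef_sub_s3 (ha2ii x).2 v).trans
      (inner_apply_self_le _ v))
    (fun n => by simpa only [hAn, map_add] using hstep n)
    (ha2iii.imp_left fun hconst n => ⟨(hconst n).1, by rw [(hconst n).2]⟩) hε
  obtain ⟨k, hk⟩ := eventually_atTop.1 (hlow.and (eventually_posSemidef_sub_sub_smul_one
    (fun n => (hRnpsd n).isHermitian) hRpd.isHermitian ha1Rlim hε))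
  refine ⟨k + 1, k.succ_pos, fun n hn hgrad => ?_⟩
  obtain ⟨hlown, hRn⟩ := hk n (k.le_succ.trans hn)
  have hHess : (Rn n + hessΨ (h n) - (R - ε • 1)).PosSemidef :=
    add_sub_right_comm (Rn n) _ _ ▸ hRn.add (hhess _)
  have hpos : (Rn n + hessΨ (h n)).PosDef := by simpa using hεR.add_posSemidef hHess
  exact ⟨hHess, (hstep n).sub_iInf_le (hA n) hpos hgrad (by positivity) (by rwa [map_add])⟩
end
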